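/- arXiv:math/0403510 — 13 statements merged into one kernel-verified Lean document; each statement's English description precedes it below -/
import Mathlib

section
/- The real Gamma function satisfies Γ(1/6) = (√3 / (√π · 2^(1/3))) · Γ(1/3)². -/
open Real

theorem gamma_one_sixth :
    Real.Gamma (1/6) =
      (Real.sqrt 3 / (Real.sqrt π * (2:ℝ) ^ ((1:ℝ)/3))) * Real.Gamma (1/3) ^ 2 := by
  have h1 := Real.Gamma_mul_Gamma_add_half (1/6)
  have h2 := Real.Gamma_mul_Gamma_one_sub (1/3)
  rw [show (1/6:ℝ) + 1/2 = 2/3 by norm_num, show 2 * (1/6:ℝ) = 1/3 by norm_num,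
    show 1 - (1/3:ℝ) = 2/3 by norm_num] at h1
  rw [show 1 - (1/3:ℝ) = 2/3 by norm_num, show π * (1/3:ℝ) = π/3 by ring,
    Real.sin_pi_div_three] at h2
  have h3 : (2:ℝ) ^ ((1:ℝ)/3) * (2:ℝ) ^ ((2:ℝ)/3) = 2 := by
    rw [← Real.rpow_add two_pos]; norm_num
  have hs : √3 ≠ 0 := by positivity
  have hp : √π ≠ 0 := by positivity
  have hc : (2:ℝ) ^ ((1:ℝ)/3) ≠ 0 := by positivity
  have hg : Real.Gamma (2/3) ≠ 0 := (Real.Gamma_pos_of_pos (by norm_num)).ne'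
  have hpp : √π * √π = π := Real.mul_self_sqrt pi_pos.le
  have h4 : Real.Gamma (1/3) * Real.Gamma (2/3) * √3 = 2 * (√π * √π) := by
    rw [h2, hpp]; field_simp
  generalize (2:ℝ) ^ ((1:ℝ)/3) = c at *
  generalize (2:ℝ) ^ ((2:ℝ)/3) = d at *
  generalize Real.Gamma (1/3) = a at *
  generalize Real.Gamma (2/3) = b at *
  generalize Real.Gamma (1/6) = g at *
  generalize √π = p at *
  generalize √3 = s at *
  rw [div_mul_eq_mul_div, eq_div_iff (mul_ne_zero hp hc)]
  apply mul_right_cancel₀ hg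
  linear_combination (p * c) * h1 + a * p ^ 2 * h3 - a * h4
end

section
/- The real Gamma function satisfies Γ(1/10) = (√φ / (√π · 2^(7/10))) · Γ(1/5) · Γ(2/5), where φ = 5 + √5. -/
open Real

theorem sin_two_pi_fifth_aux :
    Real.sin (π * (2/5)) = Real.sqrt (5 + Real.sqrt 5) / (2:ℝ) ^ ((3:ℝ)/2) := by
  have h5 : Real.sqrt 5 ^ 2 = 5 := Real.sq_sqrt (by norm_num)
  have hc : Real.cos (π * (2/5)) = (Real.sqrt 5 - 1) / 4 := by
    rw [show π * (2/5) = 2 * (π / 5) by ring, Real.cos_two_mul, Real.cos_pi_div_five]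
    linarith [h5, show ((1 + Real.sqrt 5) / 4)^2 = (1 + 2 * Real.sqrt 5 + Real.sqrt 5 ^ 2) / 16 by ring]
  have hs : 0 ≤ Real.sin (π * (2/5)) :=
    Real.sin_nonneg_of_nonneg_of_le_pi (by positivity) (by linarith [Real.pi_pos])
  have hp : ((2:ℝ) ^ ((3:ℝ)/2)) ^ 2 = 8 := by
    rw [← Real.rpow_natCast, ← Real.rpow_mul (by norm_num)]
    norm_num
  refine (sq_eq_sq₀ hs (by positivity)).1 ?_
  rw [div_pow, hp, Real.sq_sqrt (by positivity), Real.sin_sq, hc]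
  linarith [h5, show ((Real.sqrt 5 - 1) / 4)^2 = (1 - 2 * Real.sqrt 5 + Real.sqrt 5 ^ 2) / 16 by ring]

theorem gamma_one_tenth :
    Real.Gamma (1/10) =
      (Real.sqrt (5 + Real.sqrt 5) / (Real.sqrt π * (2:ℝ) ^ ((7:ℝ)/10))) *
        Real.Gamma (1/5) * Real.Gamma (2/5) := by
  have h1 := Real.Gamma_mul_Gamma_add_half (1/10)
  have h2 := Real.Gamma_mul_Gamma_one_sub (2/5)
  rw [sin_two_pi_fifth_aux] at h2
  norm_num at h1 h2
  have hg : 0 < Real.Gamma (3/5) := Real.Gamma_pos_of_pos (by norm_num)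
  have hpi : Real.sqrt π ^ 2 = π := Real.sq_sqrt Real.pi_pos.le
  have hq : 0 < Real.sqrt π := Real.sqrt_pos.2 Real.pi_pos
  have hphi : 0 < Real.sqrt (5 + Real.sqrt 5) := Real.sqrt_pos.2 (by positivity)
  have hr : (2:ℝ) ^ ((4:ℝ)/5) * (2:ℝ) ^ ((7:ℝ)/10) = (2:ℝ) ^ ((3:ℝ)/2) := by
    rw [← Real.rpow_add (by norm_num)]; norm_num
  have ha : 0 < (2:ℝ) ^ ((4:ℝ)/5) := by positivity
  have hb : 0 < (2:ℝ) ^ ((7:ℝ)/10) := by positivity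
  rw [← hr] at h2
  apply mul_right_cancel₀ hg.ne'
  rw [show ∀ a b c d : ℝ, a * b * c * d = a * b * (c * d) by intros; ring]
  norm_num at h1 h2 ⊢
  rw [h1, h2]
  field_simp
  rw [hpi]
end

section
/- The real Gamma function satisfies Γ(3/10) = (√π · φ* / (2^(3/5) · √5)) · Γ(1/5) · Γ(2/5)⁻¹, where φ* = 5 − √5. -/
open Real

theorem gamma_three_tenths :
    Real.Gamma (3/10) =
      (Real.sqrt π * (5 - Real.sqrt 5) / ((2:ℝ) ^ ((3:ℝ)/5) * Real.sqrt 5)) *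
        Real.Gamma (1/5) * (Real.Gamma (2/5))⁻¹ := by
  have hd := Real.Gamma_mul_Gamma_add_half (3/10)
  have h1 := Real.Gamma_mul_Gamma_one_sub (1/5)
  have h2 := Real.Gamma_mul_Gamma_one_sub (2/5)
  have e2 : (2:ℝ) ^ ((2:ℝ)/5) * (2:ℝ) ^ ((3:ℝ)/5) = 2 := by
    rw [← Real.rpow_add (by norm_num)]; norm_num
  have hs2 : sin (π * (2/5)) = 2 * sin (π / 5) * ((1 + √5) / 4) := by
    rw [← Real.cos_pi_div_five, ← Real.sin_two_mul]; congr 1; ring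
  have hs : 0 < sin (π / 5) :=
    Real.sin_pos_of_pos_of_lt_pi (by positivity) (by linarith [Real.pi_pos])
  have a1 : π * (1/5) = π / 5 := by ring
  rw [hs2] at h2
  rw [a1] at h1
  norm_num only at hd h1 h2
  have g1 : 0 < Real.Gamma (1/5) := Real.Gamma_pos_of_pos (by norm_num)
  have g2 : 0 < Real.Gamma (2/5) := Real.Gamma_pos_of_pos (by norm_num)
  have g4 : 0 < Real.Gamma (4/5) := Real.Gamma_pos_of_pos (by norm_num)
  have p3 : 0 < (2:ℝ) ^ ((3:ℝ)/5) := by positivity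
  have q : 0 < √5 := by positivity
  have qq : √5 * √5 = 5 := Real.mul_self_sqrt (by norm_num)
  have hpi := Real.pi_pos
  generalize Real.Gamma (1/5) = A at *
  generalize Real.Gamma (2/5) = B at *
  generalize Real.Gamma (4/5) = D at *
  generalize Real.Gamma (3/5) = C at *
  generalize Real.Gamma (3/10) = X at *
  generalize (2:ℝ) ^ ((3:ℝ)/5) = u at *
  generalize (2:ℝ) ^ ((2:ℝ)/5) = v at *
  generalize sin (π / 5) = s at *
  generalize √π = r at *
  generalize √5 = w at *
  have h12 : B * C * (1 + w) = 2 * (A * D) := by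
    rw [h1, h2]; field_simp; try norm_num
  have hv : v = 2 / u := by field_simp; linarith
  have hC : C = 2 * (A * D) / (B * (1 + w)) := by field_simp; linarith
  subst hv hC
  have hX : X = 2 * A / (B * (1 + w)) * (2 / u) * r := by
    apply mul_right_cancel₀ g4.ne'
    rw [hd]; ring
  rw [hX]
  have : (5 - w) / w = 4 / (1 + w) := by
    field_simp; nlinarith
  calc _ = 4 / (1 + w) * (A * r / (B * u)) := by field_simp; ring
    _ = _ := by rw [← this]; field_simp
end

section
/- The real Gamma function satisfies Γ(1/12) = (3^(3/8) · √(√3 + 1) / (√π · 2^(1/4))) · Γ(1/3) · Γ(1/4). -/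
open Real

lemma aux_convex (c : ℝ) (hc : 0 ≤ c) :
    ConvexOn ℝ (Set.Ioi (0:ℝ)) (fun s => Real.log (Real.Gamma (s/3 + c))) := by
  refine ⟨convex_Ioi 0, ?_⟩
  intro x hx y hy a b ha hb hab
  have hx' : (0:ℝ) < x := hx
  have hy' : (0:ℝ) < y := hy
  have h := Real.convexOn_log_Gamma.2 (x := x/3 + c) (y := y/3+c)
    (by show (0:ℝ) < _; positivity) (by show (0:ℝ) < _; positivity) ha hb hab
  simp only [smul_eq_mul, Function.comp_apply] at h ⊢
  have e : (a * x + b * y)/3 + c = a * (x/3+c) + b * (y/3+c) := by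
    linear_combination (-c) * hab
  rw [e]; exact h

noncomputable def triGamma (s : ℝ) : ℝ :=
  Real.Gamma (s/3 + 0) * Real.Gamma (s/3 + 1/3) * Real.Gamma (s/3 + 2/3) * (3:ℝ)^(s-1)
    / (Real.Gamma (1/3) * Real.Gamma (2/3))

lemma triGamma_eq {s : ℝ} (hs : 0 < s) : triGamma s = Real.Gamma s := by
  have h1 : 0 < Real.Gamma (1/3) := Real.Gamma_pos_of_pos (by norm_num)
  have h2 : 0 < Real.Gamma (2/3) := Real.Gamma_pos_of_pos (by norm_num)
  refine Real.eq_Gamma_of_log_convex ?_ ?_ ?_ ?_ hs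
  · have h := (((aux_convex 0 le_rfl).add (aux_convex (1/3) (by norm_num))).add
      (aux_convex (2/3) (by norm_num))).add
      (((convexOn_id (convex_Ioi (0:ℝ))).smul (Real.log_pos (by norm_num : (1:ℝ) < 3)).le).add_const
        (-Real.log 3 - Real.log (Real.Gamma (1/3) * Real.Gamma (2/3))))
    refine h.congr ?_
    intro x hx
    have hx' : (0:ℝ) < x := hx
    have a0 : Real.Gamma (x/3+0) ≠ 0 := (Real.Gamma_pos_of_pos (by positivity)).ne'
    have a1 : Real.Gamma (x/3+1/3) ≠ 0 := (Real.Gamma_pos_of_pos (by positivity)).ne'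
    have a2 : Real.Gamma (x/3+2/3) ≠ 0 := (Real.Gamma_pos_of_pos (by positivity)).ne'
    have a3 : (3:ℝ)^(x-1) ≠ 0 := by positivity
    simp only [Function.comp_apply, triGamma, Pi.add_apply, smul_eq_mul, id]
    rw [Real.log_div (by positivity) (by positivity), Real.log_mul (by positivity) a3,
      Real.log_mul (by positivity) a2, Real.log_mul a0 a1, Real.log_rpow (by norm_num)]
    ring
  · intro y hy
    unfold triGamma
    have e0 : (y+1)/3 + 0 = y/3+1/3 := by ring
    have e1 : (y+1)/3 + 1/3 = y/3+2/3 := by ring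
    have e2 : (y+1)/3 + 2/3 = y/3+1 := by ring
    have e3 : y + 1 - 1 = (y - 1) + 1 := by ring
    rw [e0, e1, e2, e3, Real.rpow_add (by norm_num), Real.rpow_one,
      Real.Gamma_add_one (by positivity), add_zero]
    field_simp
  · intro y hy
    unfold triGamma
    have a0 := Real.Gamma_pos_of_pos (s := y/3+0) (by positivity)
    have a1 := Real.Gamma_pos_of_pos (s := y/3+1/3) (by positivity)
    have a2 := Real.Gamma_pos_of_pos (s := y/3+2/3) (by positivity)
    positivity
  · unfold triGamma
    norm_num
    exact ⟨h1.ne', h2.ne'⟩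

theorem gamma_one_twelfth :
    Real.Gamma (1/12) =
      ((3:ℝ) ^ ((3:ℝ)/8) * Real.sqrt (Real.sqrt 3 + 1) / (Real.sqrt π * (2:ℝ) ^ ((1:ℝ)/4))) *
        Real.Gamma (1/3) * Real.Gamma (1/4) := by
  have p1 := Real.Gamma_pos_of_pos (s := 1/12) (by norm_num)
  have p2 := Real.Gamma_pos_of_pos (s := 1/6) (by norm_num)
  have p3 := Real.Gamma_pos_of_pos (s := 1/4) (by norm_num)
  have p4 := Real.Gamma_pos_of_pos (s := 1/3) (by norm_num)
  have p5 := Real.Gamma_pos_of_pos (s := 5/12) (by norm_num)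
  have p7 := Real.Gamma_pos_of_pos (s := 7/12) (by norm_num)
  have p8 := Real.Gamma_pos_of_pos (s := 2/3) (by norm_num)
  have p9 := Real.Gamma_pos_of_pos (s := 3/4) (by norm_num)
  have t := triGamma_eq (s := 1/4) (by norm_num)
  have d1 := Real.Gamma_mul_Gamma_add_half (1/12)
  have d2 := Real.Gamma_mul_Gamma_add_half (1/6)
  have r5 := Real.Gamma_mul_Gamma_one_sub (5/12)
  have r3 := Real.Gamma_mul_Gamma_one_sub (1/4)
  have r4 := Real.Gamma_mul_Gamma_one_sub (1/3)
  unfold triGamma at t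
  rw [show (1/4:ℝ)/3+0 = 1/12 by norm_num, show (1/4:ℝ)/3+1/3 = 5/12 by norm_num,
    show (1/4:ℝ)/3+2/3 = 3/4 by norm_num, show (1/4:ℝ)-1 = -(3/4) by norm_num,
    Real.rpow_neg (by norm_num)] at t
  rw [show (1/12:ℝ)+1/2 = 7/12 by norm_num, show 2*(1/12:ℝ) = 1/6 by norm_num,
    show 1 - (1/6:ℝ) = 5/6 by norm_num] at d1
  rw [show (1/6:ℝ)+1/2 = 2/3 by norm_num, show 2*(1/6:ℝ) = 1/3 by norm_num,
    show 1 - (1/3:ℝ) = 2/3 by norm_num] at d2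
  have s5 : Real.sin (π * (5/12)) = √2 * (√3+1)/4 := by
    rw [show π * (5/12) = π/4 + π/6 by ring, Real.sin_add, Real.sin_pi_div_four,
      Real.cos_pi_div_four, Real.sin_pi_div_six, Real.cos_pi_div_six]
    ring
  rw [show 1 - (5/12:ℝ) = 7/12 by norm_num, s5] at r5
  rw [show 1 - (1/4:ℝ) = 3/4 by norm_num, show π * (1/4) = π/4 by ring,
    Real.sin_pi_div_four] at r3
  rw [show 1 - (1/3:ℝ) = 2/3 by norm_num, show π * (1/3) = π/3 by ring,
    Real.sin_pi_div_three] at r4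
  -- express everything via u = 2^(1/12), v = 3^(1/8)
  obtain ⟨u, hu, hu0⟩ : ∃ u : ℝ, u = (2:ℝ)^((1:ℝ)/12) ∧ 0 < u := ⟨_, rfl, by positivity⟩
  obtain ⟨v, hv, hv0⟩ : ∃ v : ℝ, v = (3:ℝ)^((1:ℝ)/8) ∧ 0 < v := ⟨_, rfl, by positivity⟩
  have hu12 : u^12 = 2 := by
    rw [hu, ← Real.rpow_natCast, ← Real.rpow_mul (by norm_num)]; norm_num
  have hv8 : v^8 = 3 := by
    rw [hv, ← Real.rpow_natCast, ← Real.rpow_mul (by norm_num)]; norm_num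
  have q1 : (2:ℝ)^((5:ℝ)/6) = u^10 := by
    rw [hu, ← Real.rpow_natCast, ← Real.rpow_mul (by norm_num)]; norm_num
  have q2 : (2:ℝ)^((2:ℝ)/3) = u^8 := by
    rw [hu, ← Real.rpow_natCast, ← Real.rpow_mul (by norm_num)]; norm_num
  have q3 : (2:ℝ)^((1:ℝ)/4) = u^3 := by
    rw [hu, ← Real.rpow_natCast, ← Real.rpow_mul (by norm_num)]; norm_num
  have q4 : (3:ℝ)^((3:ℝ)/8) = v^3 := by
    rw [hv, ← Real.rpow_natCast, ← Real.rpow_mul (by norm_num)]; norm_num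
  have q5 : (3:ℝ)^((3:ℝ)/4) = v^6 := by
    rw [hv, ← Real.rpow_natCast, ← Real.rpow_mul (by norm_num)]; norm_num
  have q6 : √2 = u^6 := by
    rw [← hu12, show u^12 = (u^6)^2 by ring]; exact Real.sqrt_sq (by positivity)
  have q7 : √3 = v^4 := by
    rw [← hv8, show v^8 = (v^4)^2 by ring]; exact Real.sqrt_sq (by positivity)
  obtain ⟨w, hw, hw0⟩ : ∃ w : ℝ, w = √π ∧ 0 < w := ⟨_, rfl, Real.sqrt_pos.2 Real.pi_pos⟩
  have hpi : π = w^2 := by rw [hw, Real.sq_sqrt Real.pi_pos.le]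
  obtain ⟨z, hz, hz0⟩ : ∃ z : ℝ, z = √(√3+1) ∧ 0 < z := ⟨_, rfl, by positivity⟩
  have hz2 : z^2 = v^4 + 1 := by rw [hz, Real.sq_sqrt (by positivity), q7]
  rw [q4, q3, ← hz, ← hw]
  rw [q5] at t
  rw [q1, ← hw] at d1
  rw [q2, ← hw] at d2
  rw [q6, q7, hpi, ← hz2] at r5
  rw [q6, hpi] at r3
  rw [q7, hpi] at r4
  clear q1 q2 q3 q4 q5 q6 q7 s5 hu hv hpi hw hz
  generalize Real.Gamma (1/12) = g1 at *
  generalize Real.Gamma (1/6) = g2 at *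
  generalize Real.Gamma (1/4) = g3 at *
  generalize Real.Gamma (1/3) = g4 at *
  generalize Real.Gamma (5/12) = g5 at *
  generalize Real.Gamma (7/12) = g7 at *
  generalize Real.Gamma (2/3) = g8 at *
  generalize Real.Gamma (3/4) = g9 at *
  have e7 : g7 = g2 * u^10 * w / g1 := by field_simp; linarith
  have e5 : g5 = w^2 / (u^6 * z^2 / 4) / g7 := by rw [← r5]; field_simp
  have e9 : g9 = w^2 / (u^6/2) / g3 := by rw [← r3]; field_simp
  have e8 : g8 = w^2 / (v^4/2) / g4 := by rw [← r4]; field_simp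
  have e2 : g2 = g4 * u^8 * w / g8 := by field_simp; linarith
  rw [← sq_eq_sq₀ p1.le (by positivity)]
  subst e7 
  subst e5 
  subst e9
  subst e2
  subst e8
  field_simp at t ⊢
  have h36 : u^36 = 8 := by
    rw [show u^36 = (u^12)^3 by ring, hu12]; norm_num
  linear_combination (u^6/8) * t + (z ^ 2 * g4 ^ 2 * v ^ 6 * g3 ^ 2 / 8) * h36
end

section
/- The real Gamma function satisfies Γ(2/15) = (√φ* · √(√15 − ψ*) / (2 · 3^(7/20) · 5^(1/3))) · Γ(1/3)⁻¹ · Γ(2/5) · Γ(1/15), where φ* = 5 − √5 and ψ* = √(5 − 2√5). -/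
open Real

lemma mulGamma (k : ℕ) (hk : 0 < k) (s : ℝ) (hs : 0 < s) :
    ∏ j ∈ Finset.range k, Real.Gamma ((s + j) / k) =
      Real.Gamma s * (k:ℝ) ^ (1 - s) * ∏ j ∈ Finset.range k, Real.Gamma ((1 + j) / k) := by
  have hk' : (0:ℝ) < k := by exact_mod_cast hk
  have hp : ∀ {y : ℝ}, 0 < y → 0 < ∏ j ∈ Finset.range k, Real.Gamma ((y + j) / k) := by
    intro y hy
    refine Finset.prod_pos fun j _ => Real.Gamma_pos_of_pos (by positivity)
  set P := ∏ j ∈ Finset.range k, Real.Gamma ((1 + (j:ℝ)) / k) with hP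
  have hPpos : 0 < P := hp one_pos
  have key := Real.eq_Gamma_of_log_convex
    (f := fun y => (∏ j ∈ Finset.range k, Real.Gamma ((y + j) / k)) * (k:ℝ) ^ (y - 1) / P)
    ?_ ?_ ?_ ?_
  · have h := key (show s ∈ Set.Ioi (0:ℝ) from hs)
    simp only at h
    rw [← h]
    have : (k:ℝ) ^ (s - 1) * (k:ℝ) ^ (1 - s) = 1 := by
      rw [← Real.rpow_add hk']; simp
    field_simp
    exact this.symm
  · have hc : ConvexOn ℝ (Set.Ioi (0:ℝ)) (fun y : ℝ =>
        (∑ j ∈ Finset.range k, Real.log (Real.Gamma ((y + j) / k))) +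
          ((y - 1) * Real.log k - Real.log P)) := by
      apply ConvexOn.add
      · have hj : ∀ j ∈ Finset.range k, ConvexOn ℝ (Set.Ioi (0:ℝ))
            (fun y : ℝ => Real.log (Real.Gamma ((y + j) / k))) := by
          intro j _
          refine ⟨convex_Ioi _, ?_⟩
          intro x hx y hy a b ha hb hab
          have hx0 : (0:ℝ) < x := hx
          have hy0 : (0:ℝ) < y := hy
          have h := Real.convexOn_log_Gamma.2
            (show (x + j) / k ∈ Set.Ioi (0:ℝ) from by
              show (0:ℝ) < _
              positivity)
            (show (y + j) / k ∈ Set.Ioi (0:ℝ) from by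
              show (0:ℝ) < _
              positivity) ha hb hab
          have e : a • ((x + j) / k) + b • ((y + j) / k) = (a • x + b • y + j) / (k:ℝ) := by
            simp only [smul_eq_mul]
            have : b = 1 - a := by linarith
            subst this
            field_simp
            ring
          rw [e] at h
          exact h
        have : ∀ t : Finset ℕ, t ⊆ Finset.range k → ConvexOn ℝ (Set.Ioi (0:ℝ))
            (fun y : ℝ => ∑ j ∈ t, Real.log (Real.Gamma ((y + j) / k))) := by
          intro t
          induction t using Finset.induction_on with
          | empty => intro _; simpa using convexOn_const (0:ℝ) (convex_Ioi (0:ℝ))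
          | insert a t ha ih =>
            intro ht
            simp only [Finset.sum_insert ha]
            exact (hj a (ht (Finset.mem_insert_self _ _))).add
              (ih (fun x hx => ht (Finset.mem_insert_of_mem hx)))
        exact this _ (Finset.Subset.refl _)
      · refine ⟨convex_Ioi _, ?_⟩
        intro x _ y _ a b _ _ hab
        apply le_of_eq
        simp only [smul_eq_mul]
        have : b = 1 - a := by linarith
        subst this
        ring
    refine hc.congr ?_
    intro y hy
    have hy0 : (0:ℝ) < y := hy
    have hne : ∀ j ∈ Finset.range k, Real.Gamma ((y + j) / k) ≠ 0 := by
      intro j _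
      exact (Real.Gamma_pos_of_pos (by positivity)).ne'
    simp only [Function.comp]
    rw [Real.log_div (mul_pos (hp hy0) (by positivity)).ne' hPpos.ne',
      Real.log_mul (hp hy0).ne' (by positivity), Real.log_rpow hk', Real.log_prod hne]
    ring
  · intro y hy
    have h1 := Finset.prod_range_succ (fun j : ℕ => Real.Gamma ((y + j) / k)) k
    rw [Finset.prod_range_succ'] at h1
    have h2 : Real.Gamma ((y + k) / k) = y / k * Real.Gamma ((y + (0:ℕ)) / k) := by
      rw [add_div, div_self hk'.ne', Real.Gamma_add_one (by positivity)]
      simp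
    rw [h2] at h1
    have h3 : 0 < Real.Gamma ((y + (0:ℕ)) / k) := by
      apply Real.Gamma_pos_of_pos
      simp
      positivity
    have h4 : ∏ j ∈ Finset.range k, Real.Gamma ((y + 1 + j) / k) =
        (∏ j ∈ Finset.range k, Real.Gamma ((y + j) / k)) * (y / k) := by
      apply mul_right_cancel₀ h3.ne'
      rw [mul_assoc, ← h1]
      congr 1
      refine Finset.prod_congr rfl fun j _ => ?_
      congr 2
      push_cast
      ring
    rw [h4, show y + 1 - 1 = (y - 1) + 1 by ring, Real.rpow_add hk', Real.rpow_one]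
    field_simp
  · intro y hy
    exact div_pos (mul_pos (hp hy) (by positivity)) hPpos
  · simp only [sub_self, Real.rpow_zero, mul_one]
    exact div_self hPpos.ne'

lemma refl_div (a b : ℝ) (h : a + b = 1) :
    Real.Gamma a * Real.Gamma b * Real.sin (π * a) = π ∨ Real.sin (π * a) = 0 := by
  have := Real.Gamma_mul_Gamma_one_sub a
  rw [show 1 - a = b by linarith] at this
  by_cases h0 : Real.sin (π * a) = 0
  · right; exact h0
  · left; rw [this]; field_simp

lemma refl_pos (a b : ℝ) (h : a + b = 1) (ha : 0 < a) (hb : 0 < b) :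
    0 < Real.sin (π * a) ∧ Real.Gamma a * Real.Gamma b * Real.sin (π * a) = π := by
  have hs : 0 < Real.sin (π * a) :=
    Real.sin_pos_of_pos_of_lt_pi (by positivity) (by nlinarith [Real.pi_pos])
  exact ⟨hs, (refl_div a b h).resolve_right hs.ne'⟩

lemma trig_facts : Real.sin (π * (1/5)) ^ 2 = (5 - √5) / 8 ∧
    Real.sin (π * (2/5)) = (√15 - √(5 - 2 * √5)) *
      (Real.sin (π * (4/15)) * Real.sin (π * (2/15))) ∧ 0 < √15 - √(5 - 2 * √5) := by
  have hr : √5 ^ 2 = 5 := Real.sq_sqrt (by norm_num)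
  have ht : √3 ^ 2 = 3 := Real.sq_sqrt (by norm_num)
  have hr0 : 0 ≤ √5 := Real.sqrt_nonneg _
  have hr1 : 2 < √5 := by rw [Real.lt_sqrt] <;> norm_num
  have hc : Real.cos (π * (1/5)) = (1 + √5) / 4 := by
    rw [← Real.cos_pi_div_five]; congr 1; ring
  have hS0 : 0 < Real.sin (π * (1/5)) := (refl_pos (1/5) (4/5) (by norm_num) (by norm_num) (by norm_num)).1
  have hS : Real.sin (π * (1/5)) ^ 2 = (5 - √5) / 8 := by
    have := Real.sin_sq_add_cos_sq (π * (1/5))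
    rw [hc] at this
    nlinarith
  have h15 : √15 = √3 * √5 := by
    rw [← Real.sqrt_mul (by norm_num)]; norm_num
  have hpsi : √(5 - 2 * √5) = Real.sin (π * (1/5)) * (√5 - 1) := by
    rw [Real.sqrt_eq_iff_mul_self_eq_of_pos (mul_pos hS0 (by linarith))]
    have : Real.sin (π * (1/5)) * (√5 - 1) * (Real.sin (π * (1/5)) * (√5 - 1))
      = Real.sin (π * (1/5)) ^ 2 * (√5 - 1) ^ 2 := by ring
    rw [this, hS]
    nlinarith
  have h2 : Real.sin (π * (2/5)) = 2 * Real.sin (π * (1/5)) * Real.cos (π * (1/5)) := by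
    rw [← Real.sin_two_mul]; congr 1; ring
  have hc2 : Real.cos (π * (2/5)) = 2 * Real.cos (π * (1/5)) ^ 2 - 1 := by
    rw [← Real.cos_two_mul]; congr 1; ring
  have hd : Real.cos (π * (2/15)) = 1/2 * Real.cos (π * (1/5)) + √3/2 * Real.sin (π * (1/5)) := by
    rw [← Real.cos_pi_div_three, ← Real.sin_pi_div_three, ← Real.cos_sub]; congr 1; ring
  have hprod : Real.sin (π * (4/15)) * Real.sin (π * (2/15)) =
      (Real.cos (π * (2/15)) - Real.cos (π * (2/5))) / 2 := by
    have e1 := Real.cos_sub (π * (4/15)) (π * (2/15))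
    have e2 := Real.cos_add (π * (4/15)) (π * (2/15))
    rw [show π * (4/15) - π * (2/15) = π * (2/15) by ring] at e1
    rw [show π * (4/15) + π * (2/15) = π * (2/5) by ring] at e2
    linarith
  refine ⟨hS, ?_, ?_⟩
  · rw [hprod, hd, hc2, h2, hc, h15, hpsi]
    generalize Real.sin (π * (1/5)) = S at *
    generalize √5 = r at *
    generalize √3 = t at *
    have hr3 : r ^ 3 = 5 * r := by rw [pow_succ, hr]
    ring_nf
    simp only [hr3, hr, ht, hS]
    ring_nf
    simp only [hr3, hr, ht, hS]
    ring
  · rw [sub_pos]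
    apply Real.sqrt_lt_sqrt <;> nlinarith

lemma sq_main : (Real.Gamma (1/3) * Real.Gamma (2/15)) ^ 2 *
    (4 * (3:ℝ) ^ ((7:ℝ)/10) * (5:ℝ) ^ ((2:ℝ)/3)) =
    (5 - √5) * (√15 - √(5 - 2 * √5)) * (Real.Gamma (2/5) * Real.Gamma (1/15)) ^ 2 := by
  have T1 := mulGamma 3 (by norm_num) (1/5) (by norm_num)
  have T2 := mulGamma 3 (by norm_num) (2/5) (by norm_num)
  have Q := mulGamma 5 (by norm_num) (1/3) (by norm_num)
  simp only [Finset.prod_range_succ, Finset.prod_range_zero] at T1 T2 Q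
  norm_num at T1 T2 Q
  obtain ⟨p4, R4⟩ := refl_pos (4/15) (11/15) (by norm_num) (by norm_num) (by norm_num)
  obtain ⟨p3, R3⟩ := refl_pos (1/5) (4/5) (by norm_num) (by norm_num) (by norm_num)
  obtain ⟨p6, R6⟩ := refl_pos (2/5) (3/5) (by norm_num) (by norm_num) (by norm_num)
  obtain ⟨p5, R5⟩ := refl_pos (1/3) (2/3) (by norm_num) (by norm_num) (by norm_num)
  obtain ⟨p2, R2⟩ := refl_pos (2/15) (13/15) (by norm_num) (by norm_num) (by norm_num)
  obtain ⟨t1, t2, -⟩ := trig_facts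
  have t5 : Real.sin (π * (1/3)) = √3 / 2 := by
    rw [← Real.sin_pi_div_three]; congr 1; ring
  have e3 : (3:ℝ) ^ ((7:ℝ)/10) * (3:ℝ) ^ ((3:ℝ)/5) = (3:ℝ) ^ ((4:ℝ)/5) * √3 := by
    rw [Real.sqrt_eq_rpow, ← Real.rpow_add (by norm_num), ← Real.rpow_add (by norm_num)]
    norm_num
  have x3 : 0 < (3:ℝ) ^ ((3:ℝ)/5) := by positivity
  have x4 : 0 < (3:ℝ) ^ ((4:ℝ)/5) := by positivity
  have g1 : 0 < Real.Gamma (1/15) := Real.Gamma_pos_of_pos (by norm_num)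
  have g2 : 0 < Real.Gamma (2/15) := Real.Gamma_pos_of_pos (by norm_num)
  have g3 : 0 < Real.Gamma (1/5) := Real.Gamma_pos_of_pos (by norm_num)
  have g4 : 0 < Real.Gamma (4/15) := Real.Gamma_pos_of_pos (by norm_num)
  have g5 : 0 < Real.Gamma (1/3) := Real.Gamma_pos_of_pos (by norm_num)
  have g6 : 0 < Real.Gamma (2/5) := Real.Gamma_pos_of_pos (by norm_num)
  have hpi := Real.pi_pos
  generalize √15 - √(5 - 2 * √5) = D at *
  generalize 5 - √5 = K at *
  generalize Real.sin (π * (4/15)) = s4 at *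
  generalize Real.sin (π * (2/15)) = s2 at *
  generalize Real.sin (π * (1/5)) = s3 at *
  generalize Real.sin (π * (2/5)) = s6 at *
  generalize Real.sin (π * (1/3)) = s5 at *
  generalize (3:ℝ) ^ ((3:ℝ)/5) = X3 at *
  generalize (3:ℝ) ^ ((4:ℝ)/5) = X4 at *
  generalize (3:ℝ) ^ ((7:ℝ)/10) = X7 at *
  generalize (5:ℝ) ^ ((2:ℝ)/3) = X5 at *
  generalize Real.Gamma (1/15) = a at *
  generalize Real.Gamma (2/15) = b at *
  generalize Real.Gamma (1/5) = c at *
  generalize Real.Gamma (4/15) = d at *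
  generalize Real.Gamma (1/3) = e at *
  generalize Real.Gamma (2/5) = f at *
  generalize Real.Gamma (7/15) = g at *
  generalize Real.Gamma (11/15) = g11 at *
  generalize Real.Gamma (4/5) = g12 at *
  generalize Real.Gamma (3/5) = g9 at *
  generalize Real.Gamma (2/3) = g10 at *
  generalize Real.Gamma (13/15) = g13 at *
  generalize π = p at *
  have r11 : g11 = p / (d * s4) := by rw [eq_div_iff (by positivity)]; linarith
  have r12 : g12 = p / (c * s3) := by rw [eq_div_iff (by positivity)]; linarith
  have r9 : g9 = p / (f * s6) := by rw [eq_div_iff (by positivity)]; linarith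
  have r10 : g10 = p / (e * s5) := by rw [eq_div_iff (by positivity)]; linarith
  have r13 : g13 = p / (b * s2) := by rw [eq_div_iff (by positivity)]; linarith
  have u1 : a * f * s5 = c * X4 * d * s4 := by
    rw [r11, r10] at T1
    field_simp at T1
    linarith
  have u2 : b * g * s5 = f * X3 * c * s3 := by
    rw [r12, r10] at T2
    field_simp at T2
    linarith
  have u3 : a * d * g * s3 * s6 = e ^ 2 * X5 * s5 * b * s2 := by
    rw [r12, r10, r13, r9] at Q
    field_simp at Q
    linarith
  have hd : d = a * f * s5 / (c * X4 * s4) := by rw [eq_div_iff (by positivity)]; linarith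
  have hg : g = f * X3 * c * s3 / (b * s5) := by rw [eq_div_iff (by positivity)]; linarith
  have u4 : a ^ 2 * f ^ 2 * X3 * s3 ^ 2 * s6 = e ^ 2 * b ^ 2 * X5 * X4 * s5 * s2 * s4 := by
    rw [hd, hg] at u3
    field_simp at u3
    linarith
  rw [t1, t2, t5] at u4
  have hm : 0 < X3 * s2 * s4 := by positivity
  apply mul_right_cancel₀ hm.ne'
  linear_combination (-8) * u4 + 4 * e ^ 2 * b ^ 2 * X5 * s2 * s4 * e3

theorem gamma_two_fifteenths :
    Real.Gamma (2/15) =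
      (Real.sqrt (5 - Real.sqrt 5) * Real.sqrt (Real.sqrt 15 - Real.sqrt (5 - 2 * Real.sqrt 5)) /
          (2 * (3:ℝ) ^ ((7:ℝ)/20) * (5:ℝ) ^ ((1:ℝ)/3))) *
        (Real.Gamma (1/3))⁻¹ * Real.Gamma (2/5) * Real.Gamma (1/15) := by
  have h := sq_main
  obtain ⟨-, -, h15⟩ := trig_facts
  have h5 : 0 < 5 - √5 := by
    rw [sub_pos, Real.sqrt_lt] <;> norm_num
  have g1 : 0 < Real.Gamma (1/3) := Real.Gamma_pos_of_pos (by norm_num)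
  have g2 : 0 < Real.Gamma (2/15) := Real.Gamma_pos_of_pos (by norm_num)
  have g3 : 0 < Real.Gamma (2/5) := Real.Gamma_pos_of_pos (by norm_num)
  have g4 : 0 < Real.Gamma (1/15) := Real.Gamma_pos_of_pos (by norm_num)
  have e3 : (3:ℝ) ^ ((7:ℝ)/10) = ((3:ℝ) ^ ((7:ℝ)/20)) ^ 2 := by
    rw [← Real.rpow_natCast, ← Real.rpow_mul (by norm_num)]; norm_num
  have e5 : (5:ℝ) ^ ((2:ℝ)/3) = ((5:ℝ) ^ ((1:ℝ)/3)) ^ 2 := by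
    rw [← Real.rpow_natCast, ← Real.rpow_mul (by norm_num)]; norm_num
  rw [e3, e5] at h
  have a3 : 0 < (3:ℝ) ^ ((7:ℝ)/20) := by positivity
  have a5 : 0 < (5:ℝ) ^ ((1:ℝ)/3) := by positivity
  have q1 := Real.sq_sqrt h5.le
  have q2 := Real.sq_sqrt h15.le
  have q1' := Real.sqrt_pos.2 h5
  have q2' := Real.sqrt_pos.2 h15
  rw [← q1, ← q2] at h
  set A := √(5 - √5)
  set B := √(√15 - √(5 - 2 * √5))
  have : Real.Gamma (1/3) * Real.Gamma (2/15) * (2 * (3:ℝ) ^ ((7:ℝ)/20) * (5:ℝ) ^ ((1:ℝ)/3)) =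
      A * B * (Real.Gamma (2/5) * Real.Gamma (1/15)) := by
    refine (pow_left_inj₀ (by positivity) (by positivity) two_ne_zero).1 ?_
    linarith
  rw [← div_eq_mul_inv]
  rw [div_mul_eq_mul_div, div_mul_eq_mul_div, eq_div_iff g1.ne', div_mul_eq_mul_div,
    div_mul_eq_mul_div, eq_div_iff (by positivity)]
  linarith
end

section
/- The real Gamma function satisfies Γ(11/15) = 2π · 3^(3/10) · Γ(1/5) · Γ(2/5)⁻¹ · Γ(1/15)⁻¹. -/
open Real

lemma convexOn_aux (c : ℝ) (hc : 0 ≤ c) :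
    ConvexOn ℝ (Set.Ioi 0) (fun s : ℝ => Real.log (Real.Gamma (s / 3 + c))) := by
  refine ⟨convex_Ioi _, fun x hx y hy a b ha hb hab => ?_⟩
  have hx' : (0:ℝ) < x := hx
  have hy' : (0:ℝ) < y := hy
  have h := Real.convexOn_log_Gamma.2 (x := x / 3 + c) (y := y / 3 + c)
    (show (0:ℝ) < x / 3 + c by positivity) (show (0:ℝ) < y / 3 + c by positivity) ha hb hab
  have e : (a • x + b • y) / 3 + c = a • (x / 3 + c) + b • (y / 3 + c) := by
    simp only [smul_eq_mul]
    have : c = (a + b) * c := by rw [hab, one_mul]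
    linear_combination this
  simp only [e]
  exact h

noncomputable def tripleF (s : ℝ) : ℝ :=
  Real.Gamma (s / 3 + 0) * Real.Gamma (s / 3 + 1 / 3) * Real.Gamma (s / 3 + 2 / 3) * 3 ^ (s - 1)
    / (Real.Gamma (1 / 3) * Real.Gamma (2 / 3))

lemma tripleF_eq {s : ℝ} (hs : 0 < s) : tripleF s = Real.Gamma s := by
  have p1 : 0 < Real.Gamma (1 / 3) := Real.Gamma_pos_of_pos (by norm_num)
  have p2 : 0 < Real.Gamma (2 / 3) := Real.Gamma_pos_of_pos (by norm_num)
  have q : ∀ {y : ℝ}, 0 < y → ∀ c : ℝ, 0 ≤ c → 0 < Real.Gamma (y / 3 + c) := fun hy c hc =>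
    Real.Gamma_pos_of_pos (by positivity)
  refine Real.eq_Gamma_of_log_convex (f := tripleF) ?_ ?_ ?_ ?_ hs
  · have hlin : ConvexOn ℝ (Set.Ioi (0:ℝ)) (fun s : ℝ => Real.log 3 * s) := by
      refine ⟨convex_Ioi _, fun x _ y _ a b _ _ _ => le_of_eq ?_⟩
      simp only [smul_eq_mul]; ring
    refine (((((convexOn_aux 0 le_rfl).add (convexOn_aux (1/3) (by norm_num))).add
      (convexOn_aux (2/3) (by norm_num))).add hlin).add_const
        (- Real.log 3 - Real.log (Real.Gamma (1 / 3) * Real.Gamma (2 / 3)))).congr ?_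
    intro s hs
    have h0 := (q hs 0 le_rfl).ne'
    have h1 := (q hs (1/3) (by norm_num)).ne'
    have h2 := (q hs (2/3) (by norm_num)).ne'
    have h3 : (3:ℝ) ^ (s - 1) ≠ 0 := by positivity
    simp only [Function.comp_apply, tripleF, Pi.add_apply]
    rw [Real.log_div (by positivity) (by positivity), Real.log_mul (by positivity) h3,
      Real.log_mul (by positivity) h2, Real.log_mul h0 h1, Real.log_rpow (by norm_num)]
    ring
  · intro y hy
    have e1 : (y + 1) / 3 + 0 = y / 3 + 1 / 3 := by ring
    have e2 : (y + 1) / 3 + 1 / 3 = y / 3 + 2 / 3 := by ring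
    have e3 : (y + 1) / 3 + 2 / 3 = (y / 3 + 0) + 1 := by ring
    have e4 : y + 1 - 1 = (y - 1) + 1 := by ring
    unfold tripleF
    rw [e1, e2, e3, e4, Real.Gamma_add_one (by positivity), Real.rpow_add_one (by norm_num)]
    ring
  · intro y hy
    have h0 := q hy 0 le_rfl
    have h1 := q hy (1/3) (by norm_num)
    have h2 := q hy (2/3) (by norm_num)
    unfold tripleF
    positivity
  · unfold tripleF
    norm_num
    exact ⟨p1.ne', p2.ne'⟩

theorem gamma_eleven_fifteenths :
    Real.Gamma (11/15) =
      2 * π * (3:ℝ) ^ ((3:ℝ)/10) *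
        Real.Gamma (1/5) * (Real.Gamma (2/5))⁻¹ * (Real.Gamma (1/15))⁻¹ := by
  have h := tripleF_eq (s := 1/5) (by norm_num)
  have hC : Real.Gamma (1 / 3) * Real.Gamma (2 / 3) * (3:ℝ) ^ ((1:ℝ)/2) = 2 * π := by
    have := Real.Gamma_mul_Gamma_one_sub (1/3)
    rw [show (1:ℝ) - 1/3 = 2/3 by norm_num, show π * (1/3) = π / 3 by ring,
      Real.sin_pi_div_three] at this
    rw [this, ← Real.sqrt_eq_rpow]
    field_simp
  have p1 : 0 < Real.Gamma (1 / 3) := Real.Gamma_pos_of_pos (by norm_num)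
  have p2 : 0 < Real.Gamma (2 / 3) := Real.Gamma_pos_of_pos (by norm_num)
  have p3 : 0 < Real.Gamma (2 / 5) := Real.Gamma_pos_of_pos (by norm_num)
  have p4 : 0 < Real.Gamma (1 / 15) := Real.Gamma_pos_of_pos (by norm_num)
  unfold tripleF at h
  rw [show (1:ℝ)/5/3 + 0 = 1/15 by norm_num, show (1:ℝ)/5/3 + 1/3 = 2/5 by norm_num,
    show (1:ℝ)/5/3 + 2/3 = 11/15 by norm_num, show (1:ℝ)/5 - 1 = -(4/5) by norm_num,
    div_eq_iff (by positivity)] at h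
  have e1 : (3:ℝ) ^ (-(4/5) : ℝ) * (3:ℝ) ^ ((4:ℝ)/5) = 1 := by
    rw [← Real.rpow_add (by norm_num)]; norm_num
  have e2 : (3:ℝ) ^ ((1:ℝ)/2) * (3:ℝ) ^ ((3:ℝ)/10) = (3:ℝ) ^ ((4:ℝ)/5) := by
    rw [← Real.rpow_add (by norm_num)]; norm_num
  rw [← div_eq_mul_inv, ← div_eq_mul_inv, eq_div_iff p4.ne', eq_div_iff p3.ne', ← hC]
  linear_combination (3:ℝ) ^ ((4:ℝ)/5) * h - Real.Gamma (1/15) * Real.Gamma (2/5) * Real.Gamma (11/15) * e1 - Real.Gamma (1/3) * Real.Gamma (2/3) * Real.Gamma (1/5) * e2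
end

section
/- The real Gamma function satisfies Γ(3/20) = (√π · φ* · √(√10 − √φ*) / (2^(21/20) · 5^(7/8))) · Γ(2/5)⁻¹ · Γ(1/20), where φ* = 5 − √5. -/
open Real

lemma convex_aux (c : ℝ) (hc : 0 ≤ c) :
    ConvexOn ℝ (Set.Ioi (0:ℝ)) (fun s => Real.log (Real.Gamma (s / 5 + c))) := by
  refine ⟨convex_Ioi _, fun x hx y hy a b ha hb hab => ?_⟩
  have hx : 0 < x := hx
  have hy : 0 < y := hy
  have := convexOn_log_Gamma.2 (x := x / 5 + c) (y := y / 5 + c)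
    (by simp only [Set.mem_Ioi]; positivity) (by simp only [Set.mem_Ioi]; positivity) ha hb hab
  simp only [smul_eq_mul, Function.comp_apply] at this ⊢
  convert this using 3
  have : b = 1 - a := by linarith
  subst this
  ring

noncomputable def quintFn (s : ℝ) : ℝ :=
  Gamma (s / 5 + 0) * Gamma (s / 5 + 1 / 5) * Gamma (s / 5 + 2 / 5) * Gamma (s / 5 + 3 / 5)
    * Gamma (s / 5 + 4 / 5) * 5 ^ s

lemma quint_pos {s : ℝ} (hs : 0 < s) : 0 < quintFn s := by
  unfold quintFn
  have := Gamma_pos_of_pos (s := s / 5 + 0) (by positivity)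
  have := Gamma_pos_of_pos (s := s / 5 + 1 / 5) (by positivity)
  have := Gamma_pos_of_pos (s := s / 5 + 2 / 5) (by positivity)
  have := Gamma_pos_of_pos (s := s / 5 + 3 / 5) (by positivity)
  have := Gamma_pos_of_pos (s := s / 5 + 4 / 5) (by positivity)
  positivity

lemma quint_eq {s : ℝ} (hs : 0 < s) : quintFn s = quintFn 1 * Gamma s := by
  have h1 : 0 < quintFn 1 := quint_pos one_pos
  have key := eq_Gamma_of_log_convex (f := fun s => quintFn s / quintFn 1) ?_ ?_ ?_ ?_ hs
  · simp only at key
    rw [← key]; field_simp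
  · have := ((((((convex_aux 0 le_rfl).add (convex_aux (1/5) (by norm_num))).add
      (convex_aux (2/5) (by norm_num))).add (convex_aux (3/5) (by norm_num))).add
      (convex_aux (4/5) (by norm_num))).add ((convexOn_id (convex_Ioi (0 : ℝ))).smul
      (log_pos (by norm_num : (1:ℝ) < 5)).le)).add_const (- log (quintFn 1))
    refine this.congr ?_
    intro s hs
    have hs : 0 < s := hs
    have g0 := Gamma_pos_of_pos (s := s / 5 + 0) (by positivity)
    have g1 := Gamma_pos_of_pos (s := s / 5 + 1 / 5) (by positivity)
    have g2 := Gamma_pos_of_pos (s := s / 5 + 2 / 5) (by positivity)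
    have g3 := Gamma_pos_of_pos (s := s / 5 + 3 / 5) (by positivity)
    have g4 := Gamma_pos_of_pos (s := s / 5 + 4 / 5) (by positivity)
    have hp : (0:ℝ) < 5 ^ s := by positivity
    simp only [Function.comp_apply, Pi.add_apply, smul_eq_mul, id]
    rw [log_div (quint_pos hs).ne' h1.ne']
    conv_rhs => rw [quintFn]
    rw [log_mul (by positivity) (by positivity),
      log_mul (by positivity) (by positivity), log_mul (by positivity) (by positivity),
      log_mul (by positivity) (by positivity), log_mul (by positivity) (by positivity),
      log_rpow (by norm_num)]
    ring
  · intro y hy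
    have e : quintFn (y + 1) = y * quintFn y := by
      unfold quintFn
      rw [show (y + 1) / 5 + 0 = y / 5 + 1 / 5 by ring, show (y + 1) / 5 + 1 / 5 = y / 5 + 2 / 5 by ring,
        show (y + 1) / 5 + 2 / 5 = y / 5 + 3 / 5 by ring,
        show (y + 1) / 5 + 3 / 5 = y / 5 + 4 / 5 by ring,
        show (y + 1) / 5 + 4 / 5 = y / 5 + 1 by ring, Gamma_add_one (by positivity),
        rpow_add (by norm_num), rpow_one, add_zero]
      ring
    simp only [e]; ring
  · intro y hy
    exact div_pos (quint_pos hy) h1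
  · exact div_self h1.ne'

lemma cos_two_pi_five : cos (2 * (π / 5)) = (√5 - 1) / 4 := by
  rw [cos_two_mul, cos_pi_div_five]
  have : √5 ^ 2 = 5 := sq_sqrt (by norm_num)
  nlinarith

lemma sin_five_pos : 0 < sin (π / 5) :=
  sin_pos_of_pos_of_lt_pi (by positivity) (by linarith [pi_pos])

lemma sin_five_sq : sin (π / 5) ^ 2 = (5 - √5) / 8 := by
  have h := sin_sq_add_cos_sq (π / 5)
  rw [cos_pi_div_five] at h
  have : √5 ^ 2 = 5 := sq_sqrt (by norm_num)
  nlinarith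

lemma sin_two_pi_five : sin (2 * (π / 5)) = 2 * sin (π / 5) * ((1 + √5) / 4) := by
  rw [sin_two_mul, cos_pi_div_five]

lemma quint_one : quintFn 1 = 4 * π ^ 2 * √5 := by
  unfold quintFn
  have a := Gamma_mul_Gamma_one_sub (1/5)
  have b := Gamma_mul_Gamma_one_sub (2/5)
  rw [show π * (1/5) = π / 5 by ring] at a
  rw [show π * (2/5) = 2 * (π / 5) by ring, sin_two_pi_five] at b
  norm_num at a b ⊢
  have h5 : √5 ^ 2 = 5 := sq_sqrt (by norm_num)
  have h5' : 0 < √5 := by positivity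
  calc _ = (Gamma (1/5) * Gamma (4/5)) * (Gamma (2/5) * Gamma (3/5)) * 5 := by ring
    _ = _ := by
      rw [a, b]
      have := sin_five_pos
      field_simp
      rw [sin_five_sq]
      field_simp
      nlinarith

lemma alg_gamma (a b c d e f g h i j k l P w u t x r s3 s9 s4 s8 : ℝ)
    (hb : 0 < b) (hc : 0 < c) (hd : 0 < d) (hf : 0 < f)
    (hj : 0 < j) (hl : 0 < l) (hP : 0 < P) (hw : 0 < w) (ht : 0 < t)
    (h3 : 0 < s3) (h9 : 0 < s9) (h4 : 0 < s4) (h8 : 0 < s8)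
    (Q : a * x * c * e * f * u ^ 2 = 4 * P ^ 2 * r * x) (hx : 0 < x)
    (R3 : b * f = P / s3) (R9 : c * d = P / s9) (R8 : k * l = P / s8) (R4 : i * j = P / s4)
    (D1 : a * d = g * t ^ 18 * w) (D3 : b * e = h * t ^ 14 * w) (D2 : g * l = i * t ^ 16 * w)
    (D6 : h * j = l * t ^ 8 * w) :
    a ^ 2 * P * s4 * u ^ 2 = 4 * r * s9 * s3 * b ^ 2 * k ^ 2 * s8 ^ 2 * t ^ 12 := by
  rw [eq_div_iff (by positivity)] at R3 R9 R8 R4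
  have Q' : a * c * e * f * u ^ 2 = 4 * P ^ 2 * r := by
    apply mul_right_cancel₀ hx.ne'; linear_combination Q
  have A : a * e * u ^ 2 = 4 * r * s9 * s3 * b * d := by
    apply mul_right_cancel₀ (mul_pos hc hf).ne'
    have : (c * d * s9) * (b * f * s3) = P ^ 2 := by rw [R9, R3]; ring
    linear_combination Q' - 4 * r * this
  have B : a ^ 2 * h * u ^ 2 = 4 * r * s9 * s3 * b ^ 2 * g * t ^ 4 := by
    apply mul_right_cancel₀ (show t ^ 14 * w ≠ 0 by positivity)
    linear_combination a * b * A - a ^ 2 * u ^ 2 * D3 + 4 * r * s9 * s3 * b ^ 2 * D1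
  have C : a ^ 2 * l ^ 2 * u ^ 2 = 4 * r * s9 * s3 * b ^ 2 * (i * j) * t ^ 12 := by
    apply mul_right_cancel₀ (show t ^ 8 * w ≠ 0 by positivity)
    linear_combination j * l * B - a ^ 2 * u ^ 2 * l * D6 + 4 * r * s9 * s3 * b ^ 2 * t ^ 4 * j * D2
  have C2 : a ^ 2 * l ^ 2 * u ^ 2 * s4 = 4 * r * s9 * s3 * b ^ 2 * P * t ^ 12 := by
    linear_combination s4 * C + 4 * r * s9 * s3 * b ^ 2 * t ^ 12 * R4
  apply mul_right_cancel₀ (show P * l ^ 2 ≠ 0 by positivity)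
  have : k ^ 2 * l ^ 2 * s8 ^ 2 = P ^ 2 := by rw [← R8]; ring
  linear_combination P ^ 2 * C2 - 4 * r * s9 * s3 * b ^ 2 * t ^ 12 * P * this

theorem gamma_three_twentieths :
    Real.Gamma (3/20) =
      (Real.sqrt π * (5 - Real.sqrt 5) * Real.sqrt (Real.sqrt 10 - Real.sqrt (5 - Real.sqrt 5)) /
          ((2:ℝ) ^ ((21:ℝ)/20) * (5:ℝ) ^ ((7:ℝ)/8))) *
        (Real.Gamma (2/5))⁻¹ * Real.Gamma (1/20) := by
  have Q := quint_eq (s := 1/4) (by norm_num)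
  rw [quint_one, quintFn] at Q
  have R3 := Gamma_mul_Gamma_one_sub (3/20)
  have R7 := Gamma_mul_Gamma_one_sub (7/20)
  have R9 := Gamma_mul_Gamma_one_sub (9/20)
  have R8 := Gamma_mul_Gamma_one_sub (2/5)
  have R4 := Gamma_mul_Gamma_one_sub (1/5)
  have D1 := Gamma_mul_Gamma_add_half (1/20)
  have D3 := Gamma_mul_Gamma_add_half (3/20)
  have D2 := Gamma_mul_Gamma_add_half (1/10)
  have D6 := Gamma_mul_Gamma_add_half (3/10)
  rw [show π * (1/5) = π / 5 by ring] at R4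
  rw [show π * (2/5) = 2 * (π / 5) by ring] at R8
  have T := cos_sub_cos (2 * (π / 5)+π/5) (3*π/10)
  rw [show (2 * (π / 5)+π/5) = π - 2 * (π / 5) by ring, cos_pi_sub, cos_two_pi_five,
    show 3*π/10 = π/2 - π/5 by ring, cos_pi_div_two_sub,
    show (π - 2 * (π / 5) + (π/2 - π/5)) / 2 = π * (9/20) by ring,
    show (π - 2 * (π / 5) - (π/2 - π/5)) / 2 = π * (3/20) by ring] at T
  norm_num at Q R3 R7 R9 R8 R4 D1 D3 D2 D6
  have ht : (0:ℝ) < 2 ^ (1/20:ℝ) := by positivity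
  have hu : (0:ℝ) < 5 ^ (1/8:ℝ) := by positivity
  have t2 (n : ℕ) (y : ℝ) (h : y = n / 20) : (2:ℝ) ^ y = ((2:ℝ) ^ (1/20:ℝ)) ^ n := by
    rw [← rpow_mul_natCast (by norm_num), h]; congr 1; ring
  have u5 (n : ℕ) (y : ℝ) (h : y = n / 8) : (5:ℝ) ^ y = ((5:ℝ) ^ (1/8:ℝ)) ^ n := by
    rw [← rpow_mul_natCast (by norm_num), h]; congr 1; ring
  have q10 : √2 = ((2:ℝ) ^ (1/20:ℝ)) ^ 10 := by
    rw [sqrt_eq_rpow, t2 10 _ (by norm_num)]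
  have r4 : √5 = ((5:ℝ) ^ (1/8:ℝ)) ^ 4 := by
    rw [sqrt_eq_rpow, u5 4 _ (by norm_num)]
  rw [t2 18 _ (by norm_num)] at D1
  rw [t2 14 _ (by norm_num)] at D3
  rw [t2 16 _ (by norm_num)] at D2
  rw [t2 8 _ (by norm_num)] at D6
  rw [u5 2 _ (by norm_num)] at Q
  rw [t2 21 _ (by norm_num), u5 7 _ (by norm_num)]
  have hs4 := sin_five_pos
  have hs8 : 0 < sin (2 * (π / 5)) := by rw [sin_two_pi_five]; positivity
  have gp (y : ℝ) (hy : 0 < y) : 0 < Gamma y := Gamma_pos_of_pos hy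
  have hs (y : ℝ) (hy : 0 < y) (hy1 : y < 1) : 0 < sin (π * y) :=
    sin_pos_of_pos_of_lt_pi (by positivity) (by nlinarith [pi_pos])
  have M := alg_gamma _ _ _ _ _ _ _ _ _ _ _ _ _ _ _ _ _ _ _ _ _ _
    (gp _ (by norm_num)) (gp _ (by norm_num)) (gp _ (by norm_num)) (gp _ (by norm_num))
    (gp _ (by norm_num)) (gp _ (by norm_num)) pi_pos (sqrt_pos.2 pi_pos) ht
    (hs _ (by norm_num) (by norm_num)) (hs _ (by norm_num) (by norm_num)) hs4 hs8 Q
    (gp _ (by norm_num)) R3 R9 R8 R4 D1 D3 D2 D6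
  have ha := gp (1/20) (by norm_num)
  have hb := gp (3/20) (by norm_num)
  have hk := gp (2/5) (by norm_num)
  rw [sin_two_pi_five] at M
  clear Q R3 R7 R9 R8 R4 D1 D3 D2 D6
  have r2 : √5 ^ 2 = 5 := sq_sqrt (by norm_num)
  have q2 : √2 ^ 2 = 2 := sq_sqrt (by norm_num)
  have w2 : √π ^ 2 = π := sq_sqrt pi_pos.le
  have r0 : 0 < √5 := by positivity
  have q0 : 0 < √2 := by positivity
  have hr5 : √5 < 5 := by nlinarith
  have p2 : √(5 - √5) ^ 2 = 5 - √5 := sq_sqrt (by linarith)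
  have p0 : 0 < √(5 - √5) := sqrt_pos.2 (by linarith)
  have s10 : √10 = √2 * √5 := by rw [← sqrt_mul (by norm_num)]; norm_num
  have hlt : √(5 - √5) < √10 := sqrt_lt_sqrt (by linarith) (by linarith)
  have z2 : √(√10 - √(5 - √5)) ^ 2 = √10 - √(5 - √5) := sq_sqrt (by linarith)
  have S4 : sin (π / 5) = √2 * √(5 - √5) / 4 := by
    rw [← sq_eq_sq₀ hs4.le (by positivity), sin_five_sq, div_pow, mul_pow, q2, p2]; ring
  have hz : 0 < √(√10 - √(5 - √5)) := sqrt_pos.2 (by linarith)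
  rw [s10] at z2 hz hlt ⊢
  generalize √(√2 * √5 - √(5 - √5)) = z at *
  have hφ : 0 < 5 - √5 := by linarith
  rw [← sq_eq_sq₀ hb.le (by positivity)]
  generalize √(5 - √5) = p at *
  generalize sin (π * (9/20)) = s9 at *
  generalize sin (π * (3/20)) = s3 at *
  generalize Gamma (1/20) = a at *
  generalize Gamma (3/20) = b at *
  generalize Gamma (2/5) = k at *
  generalize (2:ℝ) ^ (1/20:ℝ) = t at *
  generalize (5:ℝ) ^ (1/8:ℝ) = u at *
  generalize √5 = r at *
  generalize √2 = q at *
  have M1 : a ^ 2 * π = 8 * u ^ 2 * (q * p / 4 + (r - 1) / 4) * (q * p / 4) * ((1 + r) / 4) ^ 2 * t ^ 12 *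
      b ^ 2 * k ^ 2 := by
    rw [S4] at M T
    apply mul_right_cancel₀ (show (q * p / 4) * u ^ 2 ≠ 0 by positivity)
    have T' : s9 * s3 = (q * p / 4 + (r - 1) / 4) / 2 := by linarith
    have e : 4 * r * s9 * s3 = 2 * r * (q * p / 4 + (r - 1) / 4) := by
      linear_combination 4 * r * T'
    rw [e] at M
    rw [r4] at M ⊢
    linear_combination M
  have N : 8 * u ^ 2 * (q * p / 4 + (r - 1) / 4) * (q * p / 4) * ((1 + r) / 4) ^ 2 * t ^ 12 *
      ((5 - r) ^ 2 * (q * r - p)) = (t ^ 21 * u ^ 7) ^ 2 := by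
    have e1 : (t ^ 21 * u ^ 7) ^ 2 = u ^ 2 * t ^ 12 * (q ^ 3 * r ^ 3) := by
      rw [q10, r4]; ring
    have e2 : 8 * (q * p / 4 + (r - 1) / 4) * (q * p / 4) * ((1 + r) / 4) ^ 2 *
      ((5 - r) ^ 2 * (q * r - p)) = q ^ 3 * r ^ 3 := by
      have h1 : q * p / 4 + (r - 1) / 4 = r * p * (q * r + p) / 20 := by
        linear_combination (-(p * q) / 20 + 1 / 20) * r2 - r / 20 * p2
      have h2 : (q * r + p) * (q * r - p) = 5 + r := by
        linear_combination r ^ 2 * q2 + 2 * r2 - p2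
      have h3 : (5 - r) * (1 + r) = 4 * r := by linear_combination -r2
      have h4 : (5 - r) * (5 + r) = 20 := by linear_combination -r2
      rw [h1]
      calc _ = r * q / 160 * p ^ 2 * ((q * r + p) * (q * r - p)) * ((5 - r) * (1 + r)) ^ 2 := by ring
        _ = r * q / 160 * ((5 - r) * (5 + r)) * ((5 - r) * (1 + r)) ^ 2 := by rw [h2, p2]; ring
        _ = q * r ^ 3 * 2 := by rw [h3, h4]; ring
        _ = _ := by rw [← q2]; ring
    rw [e1, ← e2]; ring
  have : b ^ 2 = π * (5 - r) ^ 2 * (q * r - p) * a ^ 2 / ((t ^ 21 * u ^ 7) ^ 2 * k ^ 2) := by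
    rw [eq_div_iff (by positivity), ← N]
    linear_combination -(5 - r) ^ 2 * (q * r - p) * M1
  rw [this, ← z2]
  nth_rewrite 1 [← w2]
  field_simp
end

section
/- The real Gamma function satisfies Γ(11/20) = 2^(1/5) · √φ · Γ(1/5) · Γ(2/5) · Γ(1/20)⁻¹, where φ = 5 + √5. -/
open Real

theorem gamma_eleven_twentieths :
    Real.Gamma (11/20) =
      (2:ℝ) ^ ((1:ℝ)/5) * Real.sqrt (5 + Real.sqrt 5) *
        Real.Gamma (1/5) * Real.Gamma (2/5) * (Real.Gamma (1/20))⁻¹ := by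
  have h1 := Real.Gamma_mul_Gamma_add_half (1/20)
  have h2 := Real.Gamma_mul_Gamma_add_half (1/10)
  have h3 := Real.Gamma_mul_Gamma_one_sub (2/5)
  rw [show (1/20 + 1/2 : ℝ) = 11/20 by norm_num, show (2 * (1/20) : ℝ) = 1/10 by norm_num,
    show (1 - 1/10 : ℝ) = 9/10 by norm_num] at h1
  rw [show (1/10 + 1/2 : ℝ) = 3/5 by norm_num, show (2 * (1/10) : ℝ) = 1/5 by norm_num,
    show (1 - 1/5 : ℝ) = 4/5 by norm_num] at h2
  rw [show (1 - 2/5 : ℝ) = 3/5 by norm_num] at h3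
  have g1 : 0 < Real.Gamma (1/20) := Real.Gamma_pos_of_pos (by norm_num)
  have g2 : 0 < Real.Gamma (3/5) := Real.Gamma_pos_of_pos (by norm_num)
  have hS : 0 < sin (π * (2/5)) :=
    sin_pos_of_pos_of_lt_pi (by positivity) (by linarith [pi_pos])
  have h5 : √5 ^ 2 = 5 := Real.sq_sqrt (by norm_num)
  have hphi : √(5 + √5) = 2 * √2 * sin (π * (2/5)) := by
    rw [Real.sqrt_eq_iff_mul_self_eq (by positivity) (by positivity)]
    have hc : cos (π * (2/5)) = (√5 - 1) / 4 := by
      rw [show π * (2/5) = 2 * (π / 5) by ring, cos_two_mul, cos_pi_div_five]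
      linarith
    have h := sin_sq_add_cos_sq (π * (2/5))
    rw [hc] at h
    have h22 : √2 ^ 2 = 2 := Real.sq_sqrt (by norm_num)
    have e : 2 * √2 * sin (π * (2/5)) * (2 * √2 * sin (π * (2/5)))
      = 4 * √2 ^ 2 * sin (π * (2/5)) ^ 2 := by ring
    rw [e, h22]
    linarith
  have hpow : (2:ℝ) ^ ((9:ℝ)/10) * (2:ℝ) ^ ((4:ℝ)/5) = (2:ℝ) ^ ((1:ℝ)/5) * (2 * √2) := by
    rw [Real.sqrt_eq_rpow, ← Real.rpow_add two_pos, ← Real.rpow_one_add' (by norm_num) (by norm_num),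
      ← Real.rpow_add two_pos]
    norm_num
  have hpi : √π ^ 2 = π := Real.sq_sqrt pi_pos.le
  rw [eq_div_iff hS.ne'] at h3
  rw [hphi, ← div_eq_mul_inv, eq_div_iff g1.ne', mul_comm, h1]
  apply mul_right_cancel₀ g2.ne'
  calc _ = (Real.Gamma (1/10) * Real.Gamma (3/5)) * 2 ^ ((9:ℝ)/10) * √π := by ring
    _ = Real.Gamma (1/5) * (2 ^ ((9:ℝ)/10) * 2 ^ ((4:ℝ)/5)) * √π ^ 2 := by rw [h2]; ring
    _ = _ := by rw [hpow, hpi]; linear_combination (-(Real.Gamma (1/5) * (2 ^ ((1:ℝ)/5) * (2 * √2)))) * h3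
end

section
/- The real Gamma function satisfies Γ(1/30) = (3^(9/20) · √φ · √(√15 + ψ) / (√π · 2^(16/15) · 5^(1/6))) · Γ(1/3) · Γ(1/5), where φ = 5 + √5 and ψ = √(5 + 2√5). -/
open Real

theorem aux_conv (m : ℕ) (hm : 0 < m) (k : ℕ) :
    ConvexOn ℝ (Set.Ioi (0:ℝ)) (fun s : ℝ => Real.log (Real.Gamma ((s + k) / m))) := by
  have hm' : (0:ℝ) < m := by exact_mod_cast hm
  have hk : (0:ℝ) ≤ k := by positivity
  refine ⟨convex_Ioi _, fun x hx y hy a b ha hb hab => ?_⟩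
  have hx' : (0:ℝ) < x := hx
  have hy' : (0:ℝ) < y := hy
  have h := Real.convexOn_log_Gamma.2 (x := (x + k) / m) (y := (y + k) / m)
    (by show (0:ℝ) < _; positivity) (by show (0:ℝ) < _; positivity) ha hb hab
  simp only [smul_eq_mul, Function.comp_apply] at h ⊢
  have e : (a * x + b * y + k) / m = a * ((x + k) / m) + b * ((y + k) / m) := by
    field_simp
    linear_combination (-(k:ℝ)) * hab
  rw [e]
  exact h

theorem aux_mult (m : ℕ) (hm : 0 < m) (s : ℝ) (hs : 0 < s) :
    (∏ k ∈ Finset.range m, Real.Gamma ((s + k) / m)) * (m:ℝ) ^ (s - 1) =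
      (∏ k ∈ Finset.range m, Real.Gamma ((1 + k) / m)) * Real.Gamma s := by
  have hm' : (0:ℝ) < m := by exact_mod_cast hm
  have gpos : ∀ y : ℝ, 0 < y → ∀ k : ℕ, 0 < Real.Gamma ((y + k) / m) := fun y hy k =>
    Real.Gamma_pos_of_pos (by positivity)
  have ppos : ∀ y : ℝ, 0 < y → 0 < ∏ k ∈ Finset.range m, Real.Gamma ((y + k) / m) :=
    fun y hy => Finset.prod_pos fun k _ => gpos y hy k
  set C := ∏ k ∈ Finset.range m, Real.Gamma ((1 + k) / m) with hC
  have hCpos : 0 < C := ppos 1 one_pos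
  have key := Real.eq_Gamma_of_log_convex
    (f := fun s => (∏ k ∈ Finset.range m, Real.Gamma ((s + k) / m)) * (m:ℝ) ^ (s - 1) / C)
    ?_ ?_ ?_ ?_ hs
  · simp only at key
    rw [← key]
    field_simp
  · have h1 : ConvexOn ℝ (Set.Ioi (0:ℝ)) (fun s : ℝ =>
        ∑ k ∈ Finset.range m, Real.log (Real.Gamma ((s + k) / m))) := by
      have : ∀ t : Finset ℕ, ConvexOn ℝ (Set.Ioi (0:ℝ)) (fun s : ℝ =>
        ∑ k ∈ t, Real.log (Real.Gamma ((s + k) / m))) := by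
        intro t
        induction t using Finset.induction_on with
        | empty => simpa using convexOn_const (0:ℝ) (convex_Ioi (0:ℝ))
        | insert a t ha ih =>
          simp only [Finset.sum_insert ha]
          exact (aux_conv m hm a).add ih
      exact this _
    have h2 : ConvexOn ℝ (Set.Ioi (0:ℝ)) (fun s : ℝ => (s - 1) * Real.log m - Real.log C) := by
      refine ⟨convex_Ioi _, fun x hx y hy a b ha hb hab => le_of_eq ?_⟩
      simp only [smul_eq_mul]
      linear_combination (Real.log m + Real.log C) * hab
    refine (h1.add h2).congr ?_
    intro y hy
    have hy' : (0:ℝ) < y := hy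
    simp only [Pi.add_apply, Function.comp_apply]
    rw [Real.log_div (mul_pos (ppos y hy') (by positivity)).ne' hCpos.ne',
      Real.log_mul (ppos y hy').ne' (by positivity), Real.log_rpow hm',
      Real.log_prod (fun k _ => (gpos y hy' k).ne')]
    ring
  · intro y hy
    have e := Finset.prod_range_succ (fun k : ℕ => Real.Gamma ((y + k) / m)) m
    rw [Finset.prod_range_succ'] at e
    have e2 : Real.Gamma ((y + (m:ℝ)) / m) = y / m * Real.Gamma ((y + ((0:ℕ):ℝ)) / m) := by
      rw [add_div, div_self hm'.ne', Real.Gamma_add_one (by positivity)]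
      simp
    rw [e2] at e
    have e3 : ∏ k ∈ Finset.range m, Real.Gamma ((y + 1 + k) / m) =
        (∏ k ∈ Finset.range m, Real.Gamma ((y + k) / m)) * (y / m) := by
      have := gpos y hy 0
      apply mul_right_cancel₀ this.ne'
      rw [mul_assoc, ← e]
      congr 1
      refine Finset.prod_congr rfl fun k _ => ?_
      push_cast
      congr 2
      ring
    rw [e3, show y + 1 - 1 = (y - 1) + 1 by ring, Real.rpow_add hm', Real.rpow_one]
    field_simp
  · intro y hy
    have := ppos y hy
    positivity
  · simp only [sub_self, Real.rpow_zero, mul_one]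
    exact div_self hCpos.ne'

theorem aux_trig : 160 * Real.sin (7 * π / 15) ^ 2 * Real.sin (2 * π / 15) * Real.sin (4 * π / 15) =
    (5 + √5) * (√15 + √(5 + 2 * √5)) * Real.sin (2 * π / 5) := by
  have h5 : √5 ^ 2 = (5:ℝ) := Real.sq_sqrt (by norm_num)
  have h3 : √3 ^ 2 = (3:ℝ) := Real.sq_sqrt (by norm_num)
  have h15 : √15 = √3 * √5 := by rw [← Real.sqrt_mul (by norm_num)]; norm_num
  have ht : 0 < Real.sin (π / 5) := Real.sin_pos_of_pos_of_lt_pi (by positivity)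
    (by linarith [Real.pi_pos])
  have hc := Real.cos_pi_div_five
  have htc := Real.sin_sq_add_cos_sq (π / 5)
  have hs2 : Real.sin (2 * π / 5) = 2 * Real.sin (π / 5) * Real.cos (π / 5) := by
    rw [← Real.sin_two_mul]; congr 1; ring
  have hc2 : Real.cos (2 * π / 5) = 2 * Real.cos (π / 5) ^ 2 - 1 := by
    rw [← Real.cos_two_mul]; congr 1; ring
  have a1 : Real.sin (7 * π / 15) ^ 2 = (1 + Real.cos (π / 15)) / 2 := by
    have : Real.cos (π / 15) = - Real.cos (2 * (7 * π / 15)) := by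
      rw [← Real.cos_pi_sub]; congr 1; ring
    rw [this, Real.cos_two_mul]
    linear_combination Real.sin_sq_add_cos_sq (7 * π / 15)
  have a2 : Real.cos (π / 15) = Real.cos (2 * π / 5) * (1 / 2) + Real.sin (2 * π / 5) * (√3 / 2) := by
    rw [← Real.cos_pi_div_three, ← Real.sin_pi_div_three, ← Real.cos_sub]; congr 1; ring
  have a3 : Real.cos (2 * π / 15) = (1 / 2) * Real.cos (π / 5) + (√3 / 2) * Real.sin (π / 5) := by
    rw [← Real.cos_pi_div_three, ← Real.sin_pi_div_three, ← Real.cos_sub]; congr 1; ring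
  have a4 : Real.sin (2 * π / 15) * Real.sin (4 * π / 15) =
      (Real.cos (2 * π / 15) - Real.cos (2 * π / 5)) / 2 := by
    rw [show 2 * π / 15 = 4 * π / 15 - 2 * π / 15 by ring,
      show 2 * π / 5 = 4 * π / 15 + 2 * π / 15 by ring, Real.cos_sub, Real.cos_add,
      show 4 * π / 15 - 2 * π / 15 = 2 * π / 15 by ring]
    ring
  rw [hc] at htc hs2 hc2 a3
  set t := Real.sin (π / 5)
  have ht2 : t ^ 2 = (5 - √5) / 8 := by linear_combination htc - h5 / 16
  have hpsi : √(5 + 2 * √5) = t * (3 + √5) := by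
    have h : (t * (3 + √5)) ^ 2 = 5 + 2 * √5 := by
      rw [mul_pow, ht2]
      linear_combination (-(√5)/8 - 1 / 8) * h5
    rw [← h]
    exact Real.sqrt_sq (by positivity)
  rw [mul_assoc, a4, a1, a2, a3, hs2, hc2, hpsi, h15]
  generalize √5 = q at *
  generalize √3 = r at *
  clear_value t
  have hq3 : q ^ 3 = 5 * q := by linear_combination q * h5
  have hq4 : q ^ 4 = 25 := by linear_combination (q ^ 2 + 5) * h5
  ring_nf
  simp only [ht2, h3, h5, hq3, hq4]
  ring_nf
  simp only [ht2, h3, h5, hq3, hq4]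
  ring_nf

theorem gamma_one_thirtieth :
    Real.Gamma (1/30) =
      ((3:ℝ) ^ ((9:ℝ)/20) * Real.sqrt (5 + Real.sqrt 5) *
          Real.sqrt (Real.sqrt 15 + Real.sqrt (5 + 2 * Real.sqrt 5)) /
          (Real.sqrt π * (2:ℝ) ^ ((16:ℝ)/15) * (5:ℝ) ^ ((1:ℝ)/6))) *
        Real.Gamma (1/3) * Real.Gamma (1/5) := by
  have hpi := Real.pi_pos
  have A := aux_mult 3 (by norm_num) (1/5) (by norm_num)
  have B := aux_mult 3 (by norm_num) (2/5) (by norm_num)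
  have C := aux_mult 5 (by norm_num) (1/3) (by norm_num)
  have D := Real.Gamma_mul_Gamma_add_half (1/30)
  have R1 := Real.Gamma_mul_Gamma_one_sub (4/15)
  have R2 := Real.Gamma_mul_Gamma_one_sub (1/5)
  have R3 := Real.Gamma_mul_Gamma_one_sub (2/15)
  have R4 := Real.Gamma_mul_Gamma_one_sub (1/3)
  have R5 := Real.Gamma_mul_Gamma_one_sub (7/15)
  have R6 := Real.Gamma_mul_Gamma_one_sub (2/5)
  rw [show π * (4/15) = 4 * π / 15 by ring] at R1
  rw [show π * (1/5) = π / 5 by ring] at R2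
  rw [show π * (2/15) = 2 * π / 15 by ring] at R3
  rw [show π * (1/3) = π / 3 by ring, Real.sin_pi_div_three] at R4
  rw [show π * (7/15) = 7 * π / 15 by ring] at R5
  rw [show π * (2/5) = 2 * π / 5 by ring] at R6
  have spos : ∀ x : ℝ, 0 < x → x < π → 0 < Real.sin x := fun x h1 h2 =>
    Real.sin_pos_of_pos_of_lt_pi h1 h2
  have s1 := spos (4 * π / 15) (by positivity) (by linarith)
  have s2 := spos (π / 5) (by positivity) (by linarith)
  have s3 := spos (2 * π / 15) (by positivity) (by linarith)
  have s5 := spos (7 * π / 15) (by positivity) (by linarith)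
  have s6 := spos (2 * π / 5) (by positivity) (by linarith)
  have T := aux_trig
  simp only [Finset.prod_range_succ, Finset.prod_range_zero, one_mul] at A B C
  norm_num at A B C D R1 R2 R3 R4 R5 R6
  have gp : ∀ x : ℝ, 0 < x → 0 < Real.Gamma x := fun x hx => Real.Gamma_pos_of_pos hx
  have g1 := gp (1/15) (by norm_num)
  have g2 := gp (2/15) (by norm_num)
  have g3 := gp (1/5) (by norm_num)
  have g5 := gp (1/3) (by norm_num)
  have g6 := gp (2/5) (by norm_num)
  have g7 := gp (7/15) (by norm_num)
  have g10 := gp (2/3) (by norm_num)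
  have g12 := gp (4/5) (by norm_num)
  have g30 := gp (1/30) (by norm_num)
  have P3 : ((3:ℝ) ^ ((9:ℝ)/20)) ^ 2 * √3 * (3 ^ (-(4 / 5) : ℝ) * 3 ^ (-(3 / 5) : ℝ)) = 1 := by
    rw [Real.sqrt_eq_rpow, ← Real.rpow_natCast, ← Real.rpow_mul (by norm_num),
      ← Real.rpow_add (by norm_num), ← Real.rpow_add (by norm_num), ← Real.rpow_add (by norm_num)]
    norm_num
  have P5 : ((5:ℝ) ^ ((1:ℝ)/6)) ^ 2 = 5 * 5 ^ (-(2 / 3) : ℝ) := by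
    nth_rewrite 2 [← Real.rpow_one (5:ℝ)]
    rw [← Real.rpow_natCast, ← Real.rpow_mul (by norm_num), ← Real.rpow_add (by norm_num)]
    norm_num
  have P2 : (2:ℝ) ^ ((14:ℝ)/15) * (2:ℝ) ^ ((16:ℝ)/15) = 4 := by
    rw [← Real.rpow_add (by norm_num)]
    norm_num
  have hv : 0 < (2:ℝ) ^ ((16:ℝ)/15) := by positivity
  have hf : 0 < (5:ℝ) ^ ((1:ℝ)/6) := by positivity
  have hp : 0 < (3:ℝ) ^ ((9:ℝ)/20) := by positivity
  have hr : 0 < √(3:ℝ) := by positivity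
  have hsp : √π ^ 2 = π := Real.sq_sqrt hpi.le
  have hsp0 : 0 < √π := by positivity
  have hphi : √(5 + √5) ^ 2 = 5 + √5 := Real.sq_sqrt (by positivity)
  have hchi : √(√15 + √(5 + 2 * √5)) ^ 2 = √15 + √(5 + 2 * √5) := Real.sq_sqrt (by positivity)
  have q1 := Real.sqrt_nonneg (5 + √5)
  have q2 := Real.sqrt_nonneg (√15 + √(5 + 2 * √5))
  generalize √(√15 + √(5 + 2 * √5)) = chi at *
  generalize √(5 + √5) = phi at *
  rw [← hphi, ← hchi] at T
  generalize (2:ℝ) ^ ((16:ℝ)/15) = v at *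
  generalize (2:ℝ) ^ ((14:ℝ)/15) = w at *
  generalize (5:ℝ) ^ ((1:ℝ)/6) = f at *
  generalize (3:ℝ) ^ ((9:ℝ)/20) = p at *
  generalize (3:ℝ) ^ (-(4 / 5) : ℝ) = a at *
  generalize (3:ℝ) ^ (-(3 / 5) : ℝ) = b at *
  generalize (5:ℝ) ^ (-(2 / 3) : ℝ) = c at *
  generalize Real.Gamma (1/30) = x at *
  generalize Real.Gamma (1/15) = G1 at *
  generalize Real.Gamma (2/15) = G2 at *
  generalize Real.Gamma (1/5) = G3 at *
  generalize Real.Gamma (4/15) = G4 at *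
  generalize Real.Gamma (1/3) = G5 at *
  generalize Real.Gamma (2/5) = G6 at *
  generalize Real.Gamma (7/15) = G7 at *
  generalize Real.Gamma (8/15) = G8 at *
  generalize Real.Gamma (3/5) = G9 at *
  generalize Real.Gamma (2/3) = G10 at *
  generalize Real.Gamma (11/15) = G11 at *
  generalize Real.Gamma (4/5) = G12 at *
  generalize Real.Gamma (13/15) = G13 at *
  generalize Real.sin (4 * π / 15) = S1 at *
  generalize Real.sin (2 * π / 15) = S3 at *
  generalize Real.sin (7 * π / 15) = S7 at *
  generalize Real.sin (2 * π / 5) = S6 at *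
  generalize √(3:ℝ) = r at *
  generalize √π = sp at *
  have E0 : G1 ^ 2 * G7 ^ 2 * (G4 * G11) * (G2 * G13) * (a * b * c) =
      G5 ^ 2 * (G5 * G10) * G3 ^ 2 * (G6 * G9) := by
    have h : 0 < G6 * G12 * G10 := by positivity
    apply mul_right_cancel₀ h.ne'
    calc _ = (G1 * G6 * G11 * a) * (G2 * G7 * G12 * b) * (G1 * G4 * G7 * G10 * G13 * c) := by ring
      _ = _ := by rw [A, B, C]; ring
  rw [R1, R3, R4, R6] at E0
  have E : G1 ^ 2 * G7 ^ 2 * (a * b * c) * r * S6 = 2 * G5 ^ 2 * G3 ^ 2 * S1 * S3 := by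
    field_simp at E0
    linear_combination E0
  have D1 : x * π = G1 * G7 * w * sp * S7 := by
    have : x * (G7 * G8) = G1 * G7 * w * sp := by linear_combination G7 * D
    rw [R5] at this
    field_simp at this
    linear_combination this
  have D2 : x * sp = G1 * G7 * w * S7 := by
    apply mul_right_cancel₀ hsp0.ne'
    linear_combination D1 + x * hsp
  have F : (x * sp * v * f) ^ 2 = (p * phi * chi * G5 * G3) ^ 2 := by
    apply mul_right_cancel₀ s6.ne'
    calc _ = G1 ^ 2 * G7 ^ 2 * S7 ^ 2 * (w * v) ^ 2 * f ^ 2 * S6 := by rw [D2]; ring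
      _ = 80 * c * S7 ^ 2 * G1 ^ 2 * G7 ^ 2 * S6 * 1 := by rw [P2, P5]; ring
      _ = 80 * S7 ^ 2 * p ^ 2 * (G1 ^ 2 * G7 ^ 2 * (a * b * c) * r * S6) := by rw [← P3]; ring
      _ = p ^ 2 * G5 ^ 2 * G3 ^ 2 * (160 * S7 ^ 2 * S3 * S1) := by rw [E]; ring
      _ = _ := by rw [T]; ring
  have F2 : x * sp * v * f = p * phi * chi * G5 * G3 :=
    (pow_left_inj₀ (by positivity) (by positivity) two_ne_zero).1 F
  field_simp
  linear_combination F2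
end

section
/- The real Gamma function satisfies Γ(59/60) = (π · φ · √(√3 + 1) · √(√5 + √3) · √(√15 + ψ) · √(√10 + √φ) / (2^(5/4) · 5^(3/4))) · Γ(1/60)⁻¹, where φ = 5 + √5 and ψ = √(5 + 2√5). -/
open Real

lemma aux_poly (a b t : ℝ) (ha : a^2 = 5) (hb : b^2 = 3) (ht : t^2 = 10 - 2*a) :
    (5+a)^2*(b+1)*(a+b)*(a*b+t*(3+a)/4)*(a+t*(1+a)/4)*(8-b*(1+a)-t)/16 = 20*a := by
  have h1 : (b+1)*(a+b) = a*b + a + b + 3 := by linear_combination hb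
  have h2 : (a*b+t*(3+a)/4)*(a+t*(1+a)/4) = 5*b + t*b*(a+5)/4 + t*(3*a+5)/4 + (5+3*a)/2 := by
    grind
  have h3 : (5+a)^2 = 30+10*a := by grind
  have e : (5+a)^2*(b+1)*(a+b)*(a*b+t*(3+a)/4)*(a+t*(1+a)/4)*(8-b*(1+a)-t)/16
    = (5+a)^2*((b+1)*(a+b))*((a*b+t*(3+a)/4)*(a+t*(1+a)/4))*(8-b*(1+a)-t)/16 := by ring
  rw [e, h1, h2, h3]
  grind

lemma aux_sin : (5 + √5)^2 * (√3+1) * (√5+√3) * (√15 + √(5+2*√5)) * (√10 + √(5+√5))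
    * sin (π/60)^2 = 20 * √10 := by
  obtain ⟨t, htd⟩ : ∃ t, t = 4 * sin (π/5) := ⟨_, rfl⟩
  have hpos : 0 < sin (π/5) := sin_pos_of_pos_of_lt_pi (by positivity) (by linarith [pi_pos])
  have ha : √5^2 = 5 := sq_sqrt (by norm_num)
  have ha0 : 0 < √5 := by positivity
  have hb : √3^2 = 3 := sq_sqrt (by norm_num)
  have hc : √2^2 = 2 := sq_sqrt (by norm_num)
  have hc0 : 0 < √2 := by positivity
  have h36 := cos_pi_div_five
  have ht0 : 0 < t := by rw [htd]; positivity
  have ht : t^2 = 10 - 2*√5 := by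
    have := sin_sq_add_cos_sq (π/5)
    rw [h36] at this
    rw [htd]
    linear_combination 16 * this - ha
  have hcos : cos (π/30) = (√3*(1+√5)+t)/8 := by
    have : π/30 = π/5 - π/6 := by ring
    rw [this, cos_sub, h36, cos_pi_div_six, sin_pi_div_six, htd]; ring
  have hsin : sin (π/60)^2 = (8-√3*(1+√5)-t)/16 := by
    have : π/30 = 2*(π/60) := by ring
    rw [this, cos_two_mul, cos_sq'] at hcos
    linarith
  have h15 : √15 = √5*√3 := by rw [← sqrt_mul (by norm_num)]; norm_num
  have h10 : √10 = √2*√5 := by rw [← sqrt_mul (by norm_num)]; norm_num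
  have hpsi : √(5+2*√5) = t*(3+√5)/4 := by
    rw [sqrt_eq_iff_mul_self_eq (by positivity) (by positivity)]
    grind
  have hs : √(5+√5) = √2 * (t*(1+√5)/4) := by
    rw [sqrt_eq_iff_mul_self_eq (by positivity) (by positivity)]
    grind
  rw [hsin, h15, h10, hpsi, hs]
  linear_combination √2 * aux_poly _ _ t ha hb ht

theorem gamma_fiftynine_sixtieths :
    Real.Gamma (59/60) =
      (π * (5 + Real.sqrt 5) * Real.sqrt (Real.sqrt 3 + 1) *
          Real.sqrt (Real.sqrt 5 + Real.sqrt 3) *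
          Real.sqrt (Real.sqrt 15 + Real.sqrt (5 + 2 * Real.sqrt 5)) *
          Real.sqrt (Real.sqrt 10 + Real.sqrt (5 + Real.sqrt 5)) /
          ((2:ℝ) ^ ((5:ℝ)/4) * (5:ℝ) ^ ((3:ℝ)/4))) *
        (Real.Gamma (1/60))⁻¹ := by
  have hG := Real.Gamma_mul_Gamma_one_sub (1/60)
  have hG0 : 0 < Real.Gamma (1/60) := Real.Gamma_pos_of_pos (by norm_num)
  have hs0 : 0 < sin (π/60) := sin_pos_of_pos_of_lt_pi (by positivity) (by linarith [pi_pos])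
  rw [show (1:ℝ) - 1/60 = 59/60 by norm_num, show π * (1/60) = π/60 by ring] at hG
  have hD : ((2:ℝ) ^ ((5:ℝ)/4) * (5:ℝ) ^ ((3:ℝ)/4))^2 = 20 * √10 := by
    have e2 : ((2:ℝ) ^ ((5:ℝ)/4))^2 = 4 * √2 := by
      rw [← rpow_natCast, ← rpow_mul (by norm_num), sqrt_eq_rpow,
        show (5:ℝ)/4 * (2:ℕ) = 2 + 1/2 by norm_num, rpow_add (by norm_num)]
      norm_num
    have e5 : ((5:ℝ) ^ ((3:ℝ)/4))^2 = 5 * √5 := by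
      rw [← rpow_natCast, ← rpow_mul (by norm_num), sqrt_eq_rpow,
        show (3:ℝ)/4 * (2:ℕ) = 1 + 1/2 by norm_num, rpow_add (by norm_num)]
      norm_num
    have h10 : √10 = √2*√5 := by rw [← sqrt_mul (by norm_num)]; norm_num
    rw [mul_pow, e2, e5, h10]; ring
  have hD0 : 0 < (2:ℝ) ^ ((5:ℝ)/4) * (5:ℝ) ^ ((3:ℝ)/4) := by positivity
  generalize (2:ℝ) ^ ((5:ℝ)/4) * (5:ℝ) ^ ((3:ℝ)/4) = D at hD hD0 ⊢
  have key : (5 + √5) * √(√3 + 1) * √(√5 + √3) * √(√15 + √(5 + 2 * √5)) *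
      √(√10 + √(5 + √5)) * sin (π/60) = D := by
    rw [← sq_eq_sq₀ (by positivity) hD0.le, hD, ← aux_sin]
    simp only [mul_pow]
    rw [sq_sqrt (by positivity), sq_sqrt (by positivity), sq_sqrt (by positivity),
      sq_sqrt (by positivity)]
  rw [eq_mul_inv_iff_mul_eq₀ hG0.ne', mul_comm, hG, div_eq_div_iff hs0.ne' hD0.ne', ← key]
  ring
end

section
/- The real algebraic numbers satisfy the identity √(√15 + ψ) · √(√10 + √φ) = (φ* / (2^(7/4) · 5^(1/4))) · √(√3 − 1) · √(√5 + √3) · (√3 + 2 + ψ), where φ = 5 + √5, φ* = 5 − √5, and ψ = √(5 + 2√5). -/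
open Real

theorem sqrt_product_identity :
    Real.sqrt (Real.sqrt 15 + Real.sqrt (5 + 2 * Real.sqrt 5)) *
        Real.sqrt (Real.sqrt 10 + Real.sqrt (5 + Real.sqrt 5)) =
      ((5 - Real.sqrt 5) / ((2:ℝ) ^ ((7:ℝ)/4) * (5:ℝ) ^ ((1:ℝ)/4))) *
        Real.sqrt (Real.sqrt 3 - 1) * Real.sqrt (Real.sqrt 5 + Real.sqrt 3) *
        (Real.sqrt 3 + 2 + Real.sqrt (5 + 2 * Real.sqrt 5)) := by
  have h15 : Real.sqrt 15 = Real.sqrt 3 * Real.sqrt 5 := by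
    rw [← Real.sqrt_mul (by norm_num)]; norm_num
  have h10 : Real.sqrt 10 = Real.sqrt 2 * Real.sqrt 5 := by
    rw [← Real.sqrt_mul (by norm_num)]; norm_num
  have e2 : Real.sqrt 2 ^ 2 = 2 := Real.sq_sqrt (by norm_num)
  have e3 : Real.sqrt 3 ^ 2 = 3 := Real.sq_sqrt (by norm_num)
  have e5 : Real.sqrt 5 ^ 2 = 5 := Real.sq_sqrt (by norm_num)
  have p2 : 0 < Real.sqrt 2 := Real.sqrt_pos.2 (by norm_num)
  have p3 : 1 < Real.sqrt 3 := Real.lt_sqrt_of_sq_lt (by norm_num)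
  have p5 : 1 < Real.sqrt 5 := Real.lt_sqrt_of_sq_lt (by norm_num)
  have q5 : Real.sqrt 5 < 5 := by nlinarith
  have ep : Real.sqrt (5 + 2 * Real.sqrt 5) ^ 2 = 5 + 2 * Real.sqrt 5 :=
    Real.sq_sqrt (by positivity)
  have pp : 0 ≤ Real.sqrt (5 + 2 * Real.sqrt 5) := Real.sqrt_nonneg _
  have hphi : Real.sqrt (5 + Real.sqrt 5) =
      Real.sqrt (5 + 2 * Real.sqrt 5) * (Real.sqrt 5 - 1) * Real.sqrt 2 / 2 := by
    rw [Real.sqrt_eq_iff_mul_self_eq (by positivity)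
      (div_nonneg (mul_nonneg (mul_nonneg pp (by linarith)) p2.le) (by norm_num))]
    have : ∀ p s t : ℝ, p ^ 2 = 5 + 2 * s → s ^ 2 = 5 → t ^ 2 = 2 →
        p * (s - 1) * t / 2 * (p * (s - 1) * t / 2) = 5 + s := by
      intro p s t h1 h2 h3
      have : p * (s - 1) * t / 2 * (p * (s - 1) * t / 2) = p^2 * (s-1)^2 * t^2/4 := by ring
      rw [this, h1, h3]
      linear_combination (s + 1/2) * h2
    exact (this _ _ _ ep e5 e2).symm
  have r2 : ((2:ℝ) ^ ((7:ℝ)/4)) ^ 2 = 8 * Real.sqrt 2 := by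
    rw [← Real.rpow_natCast, ← Real.rpow_mul (by norm_num), Real.sqrt_eq_rpow,
      show (8:ℝ) = 2 ^ (3:ℝ) by norm_num, ← Real.rpow_add (by norm_num)]
    norm_num
  have r5 : ((5:ℝ) ^ ((1:ℝ)/4)) ^ 2 = Real.sqrt 5 := by
    rw [← Real.rpow_natCast, ← Real.rpow_mul (by norm_num), Real.sqrt_eq_rpow]
    norm_num
  have a1 : 0 ≤ Real.sqrt 3 - 1 := by linarith
  have a2 : 0 ≤ 5 - Real.sqrt 5 := by linarith
  rw [← pow_left_inj₀ (by positivity) (by positivity) (two_ne_zero)]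
  simp only [mul_pow, div_pow]
  rw [r2, r5, Real.sq_sqrt (by positivity), Real.sq_sqrt (by positivity), Real.sq_sqrt a1,
    Real.sq_sqrt (by positivity), hphi, h15, h10]
  generalize Real.sqrt (5 + 2 * Real.sqrt 5) = p at *
  generalize Real.sqrt 5 = s at *
  generalize Real.sqrt 3 = r at *
  generalize Real.sqrt 2 = t at *
  clear hphi h15 h10 r2 r5
  have hs : s ≠ 0 := by linarith
  have ht : t ≠ 0 := p2.ne'
  rw [div_mul_eq_mul_div, div_mul_eq_mul_div, div_mul_eq_mul_div, eq_div_iff (by positivity)]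
  have key : (r * s + p) * (2 * s + p * (s - 1)) * (8 * s) =
      (5 - s) ^ 2 * (r - 1) * (s + r) * (r + 2 + p) ^ 2 := by
    grind
  have : (r * s + p) * (t * s + p * (s - 1) * t / 2) * (8 * t * s) =
     (t ^ 2 / 2) * ((r * s + p) * (2 * s + p * (s - 1)) * (8 * s)) := by ring
  rw [this, e2, key]; ring
end

section
/- Let H₁ = ∫₀¹ dz/√(1 − z⁵) and H₂ = ∫₀¹ z·dz/√(1 − z⁵). Then the real Gamma function satisfies Γ(1/5) = π^(1/5) · 2^(19/50) · √5 · φ^(1/10) · H₁^(2/5) · H₂^(1/5) and Γ(2/5) = π^(2/5) · 2^(4/25) · φ^(1/5) · H₁^(−1/5) · H₂^(2/5), where φ = 5 + √5. -/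
open Real

theorem aux_beta (k : ℕ) :
    ∫ z in (0:ℝ)..1, z ^ k / Real.sqrt (1 - z ^ 5) =
      (1/5) * (Real.Gamma ((k+1)/5) * Real.sqrt π / Real.Gamma ((k+1)/5 + 1/2)) := by
  have ha : (0:ℝ) < (k+1)/5 := by positivity
  have hb := ProbabilityTheory.beta_eq_betaIntegralReal ((k+1)/5) (1/2) ha (by norm_num)
  rw [ProbabilityTheory.beta, Real.Gamma_one_half_eq] at hb
  rw [hb]
  have hI : Complex.betaIntegral (((k+1)/5 : ℝ) : ℂ) ((1/2 : ℝ) : ℂ) =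
      ((∫ x in (0:ℝ)..1, x ^ (((k:ℝ)+1)/5 - 1) * (1 - x) ^ ((1:ℝ)/2 - 1) : ℝ) : ℂ) := by
    rw [Complex.betaIntegral, ← intervalIntegral.integral_ofReal]
    refine intervalIntegral.integral_congr (fun x hx => ?_)
    rw [Set.uIcc_of_le zero_le_one] at hx
    rw [Complex.ofReal_mul, Complex.ofReal_cpow hx.1, Complex.ofReal_cpow (by linarith [hx.2])]
    push_cast
    rfl
  rw [hI, Complex.ofReal_re]
  rw [intervalIntegral.integral_of_le zero_le_one, intervalIntegral.integral_of_le zero_le_one,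
    MeasureTheory.integral_Ioc_eq_integral_Ioo, MeasureTheory.integral_Ioc_eq_integral_Ioo]
  have him : (fun x : ℝ => x ^ 5) '' Set.Ioo 0 1 = Set.Ioo 0 1 := by
    ext y
    constructor
    · rintro ⟨x, hx, rfl⟩
      exact ⟨pow_pos hx.1 5, pow_lt_one₀ hx.1.le hx.2 (by norm_num)⟩
    · intro hy
      refine ⟨y ^ ((1:ℝ)/5), ⟨rpow_pos_of_pos hy.1 _, rpow_lt_one hy.1.le hy.2 (by norm_num)⟩, ?_⟩
      simp only
      rw [← Real.rpow_natCast, ← Real.rpow_mul hy.1.le]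
      norm_num
  have hs := MeasureTheory.integral_image_eq_integral_abs_deriv_smul
    (s := Set.Ioo (0:ℝ) 1) (f := fun x : ℝ => x ^ 5) (f' := fun x => 5 * x ^ 4)
    measurableSet_Ioo
    (fun x _ => by simpa using (hasDerivAt_pow 5 x).hasDerivWithinAt)
    (fun x hx y hy h => by
      exact (pow_left_inj₀ hx.1.le hy.1.le (by norm_num : (5:ℕ) ≠ 0)).1 h)
    (fun x => x ^ (((k:ℝ)+1)/5 - 1) * (1 - x) ^ ((1:ℝ)/2 - 1))
  rw [him] at hs
  rw [hs, ← MeasureTheory.integral_const_mul]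
  refine MeasureTheory.setIntegral_congr_fun measurableSet_Ioo (fun x hx => ?_)
  have hx0 : 0 < x := hx.1
  have h1 : 0 < 1 - x ^ 5 := by
    have := pow_lt_one₀ hx.1.le hx.2 (by norm_num : (5:ℕ) ≠ 0)
    linarith
  simp only [smul_eq_mul]
  rw [abs_of_pos (by positivity)]
  have e1 : (x ^ 5) ^ (((k:ℝ)+1)/5 - 1) = x ^ k / x ^ 4 := by
    rw [← Real.rpow_natCast x 5, ← Real.rpow_mul hx0.le, ← Real.rpow_natCast x k,
      ← Real.rpow_natCast x 4, ← Real.rpow_sub hx0]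
    congr 1
    push_cast
    ring
  have e2 : (1 - x ^ 5) ^ ((1:ℝ)/2 - 1) = 1 / Real.sqrt (1 - x ^ 5) := by
    rw [Real.sqrt_eq_rpow, show (1:ℝ)/2 - 1 = -(1/2) by norm_num, Real.rpow_neg h1.le, one_div]
    simp
  rw [e1, e2]
  field_simp

theorem gamma_fifths_hyperelliptic (H₁ H₂ : ℝ)
    (h₁ : H₁ = ∫ z in (0:ℝ)..1, 1 / Real.sqrt (1 - z ^ 5))
    (h₂ : H₂ = ∫ z in (0:ℝ)..1, z / Real.sqrt (1 - z ^ 5)) :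
    Real.Gamma (1/5) =
        π ^ ((1:ℝ)/5) * (2:ℝ) ^ ((19:ℝ)/50) * Real.sqrt 5 *
          (5 + Real.sqrt 5) ^ ((1:ℝ)/10) * H₁ ^ ((2:ℝ)/5) * H₂ ^ ((1:ℝ)/5) ∧
      Real.Gamma (2/5) =
        π ^ ((2:ℝ)/5) * (2:ℝ) ^ ((4:ℝ)/25) * (5 + Real.sqrt 5) ^ ((1:ℝ)/5) *
          H₁ ^ (-(1:ℝ)/5) * H₂ ^ ((2:ℝ)/5) := by
  have b0 := aux_beta 0
  have b1 := aux_beta 1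
  simp only [pow_zero, pow_one] at b0 b1
  rw [← h₁] at b0
  rw [← h₂] at b1
  norm_num at b0 b1
  have d1 := Real.Gamma_mul_Gamma_add_half (1/5)
  have d2 := Real.Gamma_mul_Gamma_add_half (2/5)
  have r := Real.Gamma_mul_Gamma_one_sub (1/5)
  norm_num at d1 d2 r
  have hsin : 0 < sin (π * (1/5)) :=
    sin_pos_of_pos_of_lt_pi (by positivity) (by linarith [pi_pos])
  have h55 : Real.sqrt 5 ^ 2 = 5 := Real.sq_sqrt (by norm_num)
  have hsq : sin (π * (1/5)) ^ 2 * (2 * (5 + Real.sqrt 5)) = 5 := by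
    rw [Real.sin_sq, show π * (1/5) = π / 5 by ring, Real.cos_pi_div_five]
    linear_combination (-(5 + Real.sqrt 5 + 2) / 8) * h55
  have p1 : 0 < Real.Gamma (1/5) := Real.Gamma_pos_of_pos (by norm_num)
  have p2 : 0 < Real.Gamma (2/5) := Real.Gamma_pos_of_pos (by norm_num)
  have p4 : 0 < Real.Gamma (4/5) := Real.Gamma_pos_of_pos (by norm_num)
  have p7 : 0 < Real.Gamma (7/10) := Real.Gamma_pos_of_pos (by norm_num)
  have p9 : 0 < Real.Gamma (9/10) := Real.Gamma_pos_of_pos (by norm_num)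
  have q1 : 0 < H₁ := by rw [b0]; positivity
  have q2 : 0 < H₂ := by rw [b1]; positivity
  have hpi := pi_pos
  have hph : 0 < 5 + Real.sqrt 5 := by positivity
  have h5 : 0 < Real.sqrt 5 := by positivity
  generalize Real.Gamma (1/5) = G1 at *
  generalize Real.Gamma (2/5) = G2 at *
  generalize Real.Gamma (4/5) = G4 at *
  generalize Real.Gamma (7/10) = G7 at *
  generalize Real.Gamma (9/10) = G9 at *
  generalize sin (π * (1/5)) = S at *
  have hsp : 0 < Real.sqrt π := Real.sqrt_pos.2 hpi
  have h2a : 0 < (2:ℝ) ^ ((3:ℝ)/5) := by positivity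
  have h2b : 0 < (2:ℝ) ^ ((1:ℝ)/5) := by positivity
  have c0 : H₁ * 5 * G7 = G1 * Real.sqrt π := by rw [b0]; field_simp
  have c1 : H₂ * 5 * G9 = G2 * Real.sqrt π := by rw [b1]; field_simp
  have cr : G1 * G4 * S = π := by rw [r]; field_simp
  have l0 := congrArg Real.log c0
  have l1 := congrArg Real.log c1
  have lr := congrArg Real.log cr
  have ld1 := congrArg Real.log d1
  have ld2 := congrArg Real.log d2
  have ls := congrArg Real.log hsq
  have t2 : 0 < (2:ℝ) := by norm_num
  rw [Real.log_mul (by positivity) (by positivity), Real.log_mul (by positivity) (by positivity),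
    Real.log_mul (by positivity) (by positivity)] at l0 l1
  rw [Real.log_mul (by positivity) (by positivity), Real.log_mul (by positivity) (by positivity)]
    at lr
  rw [Real.log_mul (by positivity) (by positivity), Real.log_mul (by positivity) (by positivity),
    Real.log_mul (by positivity) (by positivity), Real.log_rpow t2] at ld1 ld2
  rw [Real.log_mul (by positivity) (by positivity), Real.log_mul (by positivity) (by positivity),
    Real.log_pow] at ls
  push_cast at ls
  have l5 : Real.log (Real.sqrt 5) = Real.log 5 / 2 := Real.log_sqrt (by norm_num)
  constructor
  · refine Real.log_injOn_pos (Set.mem_Ioi.2 p1) (Set.mem_Ioi.2 (by positivity)) ?_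
    rw [Real.log_mul (by positivity) (by positivity), Real.log_mul (by positivity) (by positivity),
      Real.log_mul (by positivity) (by positivity), Real.log_mul (by positivity) (by positivity),
      Real.log_mul (by positivity) (by positivity), Real.log_rpow hpi, Real.log_rpow t2,
      Real.log_rpow hph, Real.log_rpow q1, Real.log_rpow q2, l5]
    linarith
  · refine Real.log_injOn_pos (Set.mem_Ioi.2 p2) (Set.mem_Ioi.2 (by positivity)) ?_
    rw [Real.log_mul (by positivity) (by positivity), Real.log_mul (by positivity) (by positivity),
      Real.log_mul (by positivity) (by positivity), Real.log_mul (by positivity) (by positivity),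
      Real.log_rpow hpi, Real.log_rpow t2,
      Real.log_rpow hph, Real.log_rpow q1, Real.log_rpow q2]
    linarith
end

section
/- The real Gamma function satisfies Γ(1/2)·Γ(2/3) / (Γ(3/4)·Γ(5/12)) = √(√3 + 1) / (2^(1/4) · 3^(3/8)). -/
open Real

/-- Auxiliary function for the triplication formula. -/
noncomputable def tripGamma (s : ℝ) : ℝ :=
  Real.Gamma (s / 3) * Real.Gamma (s / 3 + 1 / 3) * Real.Gamma (s / 3 + 2 / 3) * 3 ^ (s - 1) /
    (Real.Gamma (1/3) * Real.Gamma (2/3))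

lemma convexOn_log_Gamma_aff (c : ℝ) (hc : 0 ≤ c) :
    ConvexOn ℝ (Set.Ioi (0:ℝ)) (fun s => Real.log (Real.Gamma (s / 3 + c))) := by
  refine ⟨convex_Ioi _, fun x hx y hy a b ha hb hab => ?_⟩
  have hx' : (0:ℝ) < x := hx
  have hy' : (0:ℝ) < y := hy
  have h := Real.convexOn_log_Gamma.2 (x := x / 3 + c) (y := y / 3 + c)
    (Set.mem_Ioi.2 (by positivity)) (Set.mem_Ioi.2 (by positivity)) ha hb hab
  simp only [Function.comp_apply, smul_eq_mul] at h ⊢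
  have e : (a * x + b * y) / 3 + c = a * (x / 3 + c) + b * (y / 3 + c) := by
    linear_combination (-c) * hab
  rw [e]
  exact h

lemma tripGamma_pos {s : ℝ} (hs : 0 < s) : 0 < tripGamma s := by
  have h1 : 0 < Real.Gamma (s / 3) := Real.Gamma_pos_of_pos (by positivity)
  have h2 : 0 < Real.Gamma (s / 3 + 1 / 3) := Real.Gamma_pos_of_pos (by positivity)
  have h3 : 0 < Real.Gamma (s / 3 + 2 / 3) := Real.Gamma_pos_of_pos (by positivity)
  have h4 : 0 < Real.Gamma (1 / 3) := Real.Gamma_pos_of_pos (by positivity)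
  have h5 : 0 < Real.Gamma (2 / 3) := Real.Gamma_pos_of_pos (by positivity)
  unfold tripGamma
  positivity

lemma tripGamma_eq {s : ℝ} (hs : 0 < s) : tripGamma s = Real.Gamma s := by
  have h4 : 0 < Real.Gamma (1 / 3) := Real.Gamma_pos_of_pos (by positivity)
  have h5 : 0 < Real.Gamma (2 / 3) := Real.Gamma_pos_of_pos (by positivity)
  refine Real.eq_Gamma_of_log_convex (f := tripGamma) ?_ ?_ (fun hy => tripGamma_pos hy) ?_ hs
  · have hlin : ConvexOn ℝ (Set.Ioi (0:ℝ)) (fun s : ℝ => s * Real.log 3) := by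
      refine ⟨convex_Ioi _, fun x _ y _ a b _ _ _ => ?_⟩
      simp only [smul_eq_mul]
      apply le_of_eq
      ring
    refine ((((convexOn_log_Gamma_aff 0 le_rfl).add
      (convexOn_log_Gamma_aff (1/3) (by norm_num))).add
      (convexOn_log_Gamma_aff (2/3) (by norm_num))).add hlin |>.add_const
      (-(Real.log 3) - Real.log (Real.Gamma (1/3) * Real.Gamma (2/3)))).congr ?_
    intro s hs
    have hs' : (0:ℝ) < s := hs
    have h1 : 0 < Real.Gamma (s / 3) := Real.Gamma_pos_of_pos (by positivity)
    have h2 : 0 < Real.Gamma (s / 3 + 1 / 3) := Real.Gamma_pos_of_pos (by positivity)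
    have h3 : 0 < Real.Gamma (s / 3 + 2 / 3) := Real.Gamma_pos_of_pos (by positivity)
    have h6 : (0:ℝ) < 3 ^ (s - 1) := by positivity
    simp only [Pi.add_apply, Function.comp_apply, tripGamma, add_zero]
    rw [Real.log_div (by positivity) (by positivity), Real.log_mul (by positivity) h6.ne',
      Real.log_mul (by positivity) h3.ne', Real.log_mul h1.ne' h2.ne',
      Real.log_rpow (by norm_num)]
    ring
  · intro y hy
    unfold tripGamma
    rw [show y + 1 - 1 = (y - 1) + 1 by ring, Real.rpow_add (by norm_num), Real.rpow_one,
      show (y + 1) / 3 + 2 / 3 = y / 3 + 1 by ring, Real.Gamma_add_one (by positivity),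
      show (y + 1) / 3 + 1 / 3 = y / 3 + 2 / 3 by ring,
      show (y + 1) / 3 = y / 3 + 1 / 3 by ring]
    ring
  · unfold tripGamma
    rw [show (1:ℝ) / 3 + 1 / 3 = 2 / 3 by norm_num, show (1:ℝ) / 3 + 2 / 3 = 1 by norm_num]
    simp only [sub_self, Real.rpow_zero, Real.Gamma_one, mul_one]
    exact div_self (by positivity)

theorem hypergeometric_gamma_quotient :
    Real.Gamma (1/2) * Real.Gamma (2/3) / (Real.Gamma (3/4) * Real.Gamma (5/12)) =
      Real.sqrt (Real.sqrt 3 + 1) / ((2:ℝ) ^ ((1:ℝ)/4) * (3:ℝ) ^ ((3:ℝ)/8)) := by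
  have hT := tripGamma_eq (s := 1/4) (by norm_num)
  unfold tripGamma at hT
  rw [show (1:ℝ)/4/3 = 1/12 by norm_num, show (1:ℝ)/12+1/3 = 5/12 by norm_num,
    show (1:ℝ)/12+2/3 = 3/4 by norm_num, show (1:ℝ)/4-1 = -(3/4) by norm_num,
    Real.rpow_neg (by norm_num)] at hT
  have hD1 := Real.Gamma_mul_Gamma_add_half (1/12)
  rw [show (1:ℝ)/12+1/2 = 7/12 by norm_num, show (2:ℝ)*(1/12) = 1/6 by norm_num,
    show (1:ℝ)-1/6 = 5/6 by norm_num] at hD1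
  have hD2 := Real.Gamma_mul_Gamma_add_half (1/6)
  rw [show (1:ℝ)/6+1/2 = 2/3 by norm_num, show (2:ℝ)*(1/6) = 1/3 by norm_num,
    show (1:ℝ)-1/3 = 2/3 by norm_num] at hD2
  have hR1 := Real.Gamma_mul_Gamma_one_sub (1/4)
  rw [show (1:ℝ)-1/4 = 3/4 by norm_num, show π * (1/4) = π/4 by ring, Real.sin_pi_div_four] at hR1
  have hR2 := Real.Gamma_mul_Gamma_one_sub (5/12)
  rw [show (1:ℝ)-5/12 = 7/12 by norm_num, show π * (5/12) = π/4 + π/6 by ring, Real.sin_add,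
    Real.sin_pi_div_four, Real.cos_pi_div_four, Real.sin_pi_div_six, Real.cos_pi_div_six] at hR2
  have hpq : (2:ℝ)^((5:ℝ)/6) * 2^((2:ℝ)/3) = 2 * √2 := by
    rw [← Real.rpow_add (by norm_num), Real.sqrt_eq_rpow]
    rw [show (5:ℝ)/6 + 2/3 = 1 + 1/2 by norm_num, Real.rpow_add (by norm_num), Real.rpow_one]
  have ht : ((3:ℝ)^((3:ℝ)/8))^2 = 3^((3:ℝ)/4) := by
    rw [← Real.rpow_natCast, ← Real.rpow_mul (by norm_num)]; norm_num
  have h2 : ((2:ℝ)^((1:ℝ)/4))^2 = √2 := by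
    rw [← Real.rpow_natCast, ← Real.rpow_mul (by norm_num), Real.sqrt_eq_rpow]; norm_num
  have hs2 : √(2:ℝ)^2 = 2 := Real.sq_sqrt (by norm_num)
  have hs2p : 0 < √(2:ℝ) := by positivity
  have hs3p : 0 < √(3:ℝ) := by positivity
  have hw : √π^2 = π := Real.sq_sqrt Real.pi_pos.le
  have hpi := Real.pi_pos
  have ha : 0 < Real.Gamma (5/12) := Real.Gamma_pos_of_pos (by norm_num)
  have hb : 0 < Real.Gamma (3/4) := Real.Gamma_pos_of_pos (by norm_num)
  have hc : 0 < Real.Gamma (2/3) := Real.Gamma_pos_of_pos (by norm_num)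
  have hTp : 0 < Real.Gamma (1/3) := Real.Gamma_pos_of_pos (by norm_num)
  have htp : (0:ℝ) < 3^((3:ℝ)/4) := by positivity
  have htp' : (0:ℝ) < 3^((3:ℝ)/8) := by positivity
  have h2p' : (0:ℝ) < 2^((1:ℝ)/4) := by positivity
  rw [Real.Gamma_one_half_eq]
  generalize Real.Gamma (5/12) = a at *
  generalize Real.Gamma (3/4) = b at *
  generalize Real.Gamma (2/3) = c at *
  generalize Real.Gamma (1/3) = T at *
  generalize Real.Gamma (1/4) = Q at *
  generalize Real.Gamma (1/12) = G at *
  generalize Real.Gamma (1/6) = X at *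
  generalize Real.Gamma (7/12) = S at *
  generalize (3:ℝ)^((3:ℝ)/4) = t at *
  generalize (3:ℝ)^((3:ℝ)/8) = t' at *
  generalize (2:ℝ)^((1:ℝ)/4) = r at *
  generalize (2:ℝ)^((5:ℝ)/6) = p at *
  generalize (2:ℝ)^((2:ℝ)/3) = q at *
  have e1 : G * a * b = Q * T * c * t := by
    field_simp at hT
    linear_combination hT
  have e2 : Q * b = π * √2 := by
    rw [hR1]; field_simp; linear_combination -hs2
  have e3 : a * S * ((√3 + 1) * √2) = 4 * π := by
    rw [hR2]; field_simp; ring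
  have e4 : G * S * c = 2 * √2 * T * π := by
    linear_combination c * hD1 + p * √π * hD2 + √π^2 * T * hpq + 2 * √2 * T * hw
  have e5 : c^2 * t * S = 2 * a * b^2 := by
    have : (T * π * √2) * (c^2 * t * S) = (T * π * √2) * (2 * a * b^2) := by
      linear_combination a * b^2 * e4 - b * S * c * e1 - T * c^2 * t * S * e2
    exact mul_left_cancel₀ (by positivity) this
  have e6 : π * c^2 * (√2 * t) = (√3 + 1) * (a^2 * b^2) := by
    linear_combination (-(1/4) * √2 * c^2 * t) * e3 + (1/4) * √2^2 * a * (√3+1) * e5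
      + (1/2) * (√3+1) * a^2 * b^2 * hs2
  have hu : √(√3+1)^2 = √3+1 := Real.sq_sqrt (by positivity)
  rw [← sq_eq_sq₀ (by positivity) (by positivity)]
  rw [div_pow, div_pow, mul_pow, mul_pow, mul_pow, hu, hw, ht, h2,
    div_eq_div_iff (by positivity) (by positivity)]
  linear_combination e6
end
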